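/- arXiv:1307.1479 — 2 statements merged into one kernel-verified Lean document; each statement's English description precedes it below -/
import Mathlib

section
/- There exists a field K of characteristic 0 and two quaternion division algebras D₁ and D₂ over K (central division K-algebras of degree 2) that are not isomorphic as K-algebras but have the same quadratic subfields: for every field extension F/K of degree 2, there is a K-algebra embedding F → D₁ if and only if there is a K-algebra embedding F → D₂. In particular, the genus of a quaternion division algebra can contain more than one class. -/
open Polynomial

section twist
variable {E : Type} [Field E] (σ : E →+* E) (g : E)

/-- twisted reversal -/
noncomputable def twRev (p : E[X]) : E[X] := ((p.map σ).comp (C g * X)).reverse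

theorem twRev_mul (p q : E[X]) : twRev σ g (p * q) = twRev σ g p * twRev σ g q := by
  simp [twRev, reverse_mul_of_domain]

theorem twRev_aux_coeff (p : E[X]) (i : ℕ) :
    ((p.map σ).comp (C g * X)).coeff i = σ (p.coeff i) * g ^ i := by
  rw [comp_C_mul_X_coeff, coeff_map]

theorem twRev_aux_natDegree (hg : g ≠ 0) (p : E[X]) :
    ((p.map σ).comp (C g * X)).natDegree = p.natDegree := by
  rw [natDegree_comp, natDegree_C_mul_X _ hg, mul_one, natDegree_map]

theorem twRev_natDegree (hg : g ≠ 0) (p : E[X]) (h0 : p.coeff 0 ≠ 0) :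
    (twRev σ g p).natDegree = p.natDegree := by
  rw [twRev, reverse_natDegree, twRev_aux_natDegree σ g hg,
    natTrailingDegree_eq_zero.2 (Or.inr _), Nat.sub_zero]
  rw [twRev_aux_coeff]
  simpa using h0

theorem twRev_coeff (hg : g ≠ 0) (p : E[X]) (i : ℕ) (hi : i ≤ p.natDegree) :
    (twRev σ g p).coeff i = σ (p.coeff (p.natDegree - i)) * g ^ (p.natDegree - i) := by
  rw [twRev, coeff_reverse, twRev_aux_natDegree σ g hg, revAt_le hi, twRev_aux_coeff]

theorem twRev_coeff_zero (hg : g ≠ 0) (p : E[X]) (h : p ≠ 0) :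
    (twRev σ g p).coeff 0 ≠ 0 := by
  rw [twRev_coeff σ g hg p 0 (Nat.zero_le _)]
  simp [hg, h]

theorem twRev_twRev (hσ : ∀ x, σ (σ x) = x) (hσg : σ g = g) (hg : g ≠ 0) (p : E[X])
    (h0 : p.coeff 0 ≠ 0) : twRev σ g (twRev σ g p) = C (g ^ p.natDegree) * p := by
  have hp : p ≠ 0 := by rintro rfl; simp at h0
  have hd := twRev_natDegree σ g hg p h0
  have hd2 := twRev_natDegree σ g hg _ (twRev_coeff_zero σ g hg p hp)
  ext i
  rcases le_or_gt i p.natDegree with hi | hi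
  · rw [twRev_coeff σ g hg _ i (by omega), hd, twRev_coeff σ g hg p _ (by omega), coeff_C_mul,
      show p.natDegree - (p.natDegree - i) = i by omega]
    simp only [map_mul, map_pow, hσ, hσg]
    rw [mul_assoc, ← pow_add, show i + (p.natDegree - i) = p.natDegree by omega]
    ring
  · rw [coeff_eq_zero_of_natDegree_lt (by omega), coeff_C_mul,
      coeff_eq_zero_of_natDegree_lt hi, mul_zero]

theorem twist_descent (hσ : ∀ x, σ (σ x) = x) (hσg : σ g = g) (hg : g ≠ 0) (n : ℕ) :
    ∀ (β : E) (p q : E[X]), p.natDegree = n → p.coeff 0 ≠ 0 → q.coeff 0 ≠ 0 → β ≠ 0 →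
      C β * (q * twRev σ g q) = p * twRev σ g p →
      ∃ (k : ℕ) (e : E), β * g ^ k = e * σ e := by
  induction n using Nat.strong_induction_on with
  | _ n ih =>
  intro β p q hn hp0 hq0 hβ h
  have hp : p ≠ 0 := by rintro rfl; simp at hp0
  have hq : q ≠ 0 := by rintro rfl; simp at hq0
  have hne : ∀ r : E[X], r.coeff 0 ≠ 0 → twRev σ g r ≠ 0 := by
    intro r hr h'
    have := twRev_coeff_zero σ g hg r (by rintro rfl; simp at hr)
    simp [h'] at this
  have hdeg : q.natDegree = p.natDegree := by
    have := congrArg natDegree h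
    rw [natDegree_C_mul hβ, natDegree_mul hq (hne q hq0), natDegree_mul hp (hne p hp0),
      twRev_natDegree σ g hg p hp0, twRev_natDegree σ g hg q hq0] at this
    omega
  by_cases hu : IsUnit p
  · have hpd : p.natDegree = 0 := natDegree_eq_zero_of_isUnit hu
    obtain ⟨u, rfl⟩ := natDegree_eq_zero.1 hpd
    obtain ⟨v, rfl⟩ := natDegree_eq_zero.1 (hdeg.trans hpd)
    simp only [twRev, map_C, C_comp, reverse_C, ← C_mul] at h
    have h := C_injective h
    have hv : v ≠ 0 := by simpa using hq0
    have hv' : σ v ≠ 0 := by simpa using hv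
    refine ⟨0, u / v, ?_⟩
    rw [map_div₀]
    field_simp
    linear_combination h
  · obtain ⟨π, hπ, p₁, rfl⟩ := WfDvdMonoid.exists_irreducible_factor hu hp
    have hπ' := hπ.prime
    have hc : (π * p₁).coeff 0 = π.coeff 0 * p₁.coeff 0 := mul_coeff_zero _ _
    have hπ0 : π.coeff 0 ≠ 0 := fun h' => hp0 (by rw [hc, h', zero_mul])
    have hp10 : p₁.coeff 0 ≠ 0 := fun h' => hp0 (by rw [hc, h', mul_zero])
    have hp1 : p₁ ≠ 0 := by rintro rfl; simp at hp10
    have hlt : p₁.natDegree < n := by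
      rw [← hn, natDegree_mul hπ.ne_zero hp1]
      have := hπ.natDegree_pos
      omega
    have hs : π * twRev σ g π ≠ 0 := mul_ne_zero hπ.ne_zero (hne π hπ0)
    have hdvd : π ∣ q * twRev σ g q := by
      have : π ∣ C β * (q * twRev σ g q) := by rw [h, mul_assoc]; exact dvd_mul_right _ _
      rcases hπ'.dvd_or_dvd this with h' | h'
      · exact absurd (isUnit_of_dvd_unit h' (by simpa using hβ)) hπ.not_isUnit
      · exact h'
    rcases hπ'.dvd_or_dvd hdvd with ⟨q₁, rfl⟩ | ⟨m, hm⟩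
    · have hq10 : q₁.coeff 0 ≠ 0 := fun h' => hq0 (by rw [mul_coeff_zero, h', mul_zero])
      refine ih _ hlt β p₁ q₁ rfl hp10 hq10 hβ (mul_left_cancel₀ hs ?_)
      rw [twRev_mul, twRev_mul] at h
      linear_combination h
    · have h1 := twRev_twRev σ g hσ hσg hg q hq0
      rw [hm, twRev_mul] at h1
      obtain ⟨q₁, rfl⟩ : twRev σ g π ∣ q := by
        have : twRev σ g π ∣ C (g ^ q.natDegree) * q := Dvd.intro _ h1
        refine (IsUnit.dvd_mul_left ?_).1 this
        exact isUnit_C.2 (pow_ne_zero _ hg).isUnit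
      have hq10 : q₁.coeff 0 ≠ 0 := fun h' => hq0 (by rw [mul_coeff_zero, h', mul_zero])
      have h3 : C (β * g ^ π.natDegree) * (q₁ * twRev σ g q₁) = p₁ * twRev σ g p₁ := by
        refine mul_left_cancel₀ hs ?_
        rw [twRev_mul, twRev_mul, twRev_twRev σ g hσ hσg hg π hπ0] at h
        rw [C_mul]
        linear_combination h
      obtain ⟨k, e, he⟩ := ih _ hlt (β * g ^ π.natDegree) p₁ q₁ rfl hp10 hq10
        (mul_ne_zero hβ (pow_ne_zero _ hg)) h3
      exact ⟨π.natDegree + k, e, by rw [← he]; ring⟩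

/-- removing the powers of `X` -/
theorem twist_descent' (hσ : ∀ x, σ (σ x) = x) (hσg : σ g = g) (hg : g ≠ 0)
    (β : E) (hβ : β ≠ 0) {Ω : Type} [Field Ω] (ι : E →+* Ω) (T : Ω)
    (hT : ∀ p : E[X], p.eval₂ ι T = 0 → p = 0) (p q : E[X]) (hq : q ≠ 0)
    (h : ι β * (q.eval₂ ι T * (q.map σ).eval₂ ι (ι g / T)) =
      p.eval₂ ι T * (p.map σ).eval₂ ι (ι g / T)) :
    ∃ (k : ℤ) (e : E), β * g ^ k = e * σ e := by
  have hT0 : T ≠ 0 := by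
    rintro rfl
    exact X_ne_zero (hT X (by simp))
  have hιg : ι g ≠ 0 := by simpa using hg
  -- evaluation of the twisted reversal
  have key : ∀ r : E[X], (r.map σ).eval₂ ι (ι g / T) * T ^ r.natDegree
      = (twRev σ g r).eval₂ ι T := by
    intro r
    let _ : Invertible T⁻¹ := ⟨T, by simp [hT0], by simp [hT0]⟩
    have h1 := eval₂_reverse_mul_pow ι T⁻¹ ((r.map σ).comp (C g * X))
    have h2 : (⅟T⁻¹ : Ω) = T := rfl
    rw [h2, twRev_aux_natDegree σ g hg, eval₂_comp] at h1
    simp only [eval₂_mul, eval₂_C, eval₂_X] at h1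
    rw [div_eq_mul_inv, ← h1, mul_assoc, ← mul_pow, inv_mul_cancel₀ hT0, one_pow, mul_one, twRev]
  have hne : ∀ r : E[X], r ≠ 0 → (r.map σ).eval₂ ι (ι g / T) ≠ 0 := by
    intro r hr h'
    have h1 := key r
    rw [h', zero_mul] at h1
    have h2 := hT _ h1.symm
    have := twRev_coeff_zero σ g hg r hr
    simp [h2] at this
  have hp : p ≠ 0 := by
    rintro rfl
    simp only [eval₂_zero, zero_mul, mul_eq_zero] at h
    rcases h with h | h | h
    · exact hβ (by simpa using h)
    · exact hq (hT _ h)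
    · exact hne q hq h
  have split : ∀ r : E[X], r ≠ 0 → ∃ (j : ℕ) (s : E[X]), s.coeff 0 ≠ 0 ∧
      r.eval₂ ι T * (r.map σ).eval₂ ι (ι g / T) * T ^ s.natDegree
        = (C (g ^ j) * (s * twRev σ g s)).eval₂ ι T := by
    intro r hr
    obtain ⟨s, hs, hd⟩ := exists_eq_pow_rootMultiplicity_mul_and_not_dvd r hr 0
    rw [C_0, sub_zero] at hs hd
    generalize rootMultiplicity 0 r = j at hs
    refine ⟨j, s, fun h' => hd (X_dvd_iff.2 h'), ?_⟩
    subst hs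
    simp only [eval₂_mul, eval₂_C, ← key, Polynomial.map_mul, Polynomial.map_pow, map_X,
      eval₂_pow, eval₂_X, map_pow, div_pow]
    field_simp
  obtain ⟨j, p₁, hp0, h1⟩ := split p hp
  obtain ⟨l, q₁, hq0, h2⟩ := split q hq
  have hpoly : C (β * g ^ l) * (q₁ * twRev σ g q₁) * X ^ p₁.natDegree
      = C (g ^ j) * (p₁ * twRev σ g p₁) * X ^ q₁.natDegree := by
    rw [← sub_eq_zero]
    apply hT
    rw [eval₂_sub, eval₂_mul, eval₂_mul (q := X ^ _), ← h1, C_mul, mul_assoc (C β), eval₂_mul (p := C β),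
      ← h2]
    simp only [eval₂_C, eval₂_X, eval₂_pow]
    linear_combination (T ^ p₁.natDegree * T ^ q₁.natDegree) * h
  have hp1 : p₁ ≠ 0 := by rintro rfl; simp at hp0
  have hq1 : q₁ ≠ 0 := by rintro rfl; simp at hq0
  have hne' : ∀ r : E[X], r ≠ 0 → twRev σ g r ≠ 0 := by
    intro r hr h'
    have := twRev_coeff_zero σ g hg r hr
    simp [h'] at this
  have hb : β * g ^ l ≠ 0 := mul_ne_zero hβ (pow_ne_zero _ hg)
  have hj : g ^ j ≠ 0 := pow_ne_zero _ hg
  have hd : p₁.natDegree = q₁.natDegree := by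
    have := congrArg natDegree hpoly
    rw [natDegree_mul_X_pow, natDegree_mul_X_pow, natDegree_C_mul hb, natDegree_C_mul hj,
      natDegree_mul hp1 (hne' _ hp1), natDegree_mul hq1 (hne' _ hq1),
      twRev_natDegree σ g hg _ hp0, twRev_natDegree σ g hg _ hq0] at this
    · omega
    · exact mul_ne_zero (C_ne_zero.2 hj) (mul_ne_zero hp1 (hne' _ hp1))
    · exact mul_ne_zero (C_ne_zero.2 hb) (mul_ne_zero hq1 (hne' _ hq1))
  rw [hd] at hpoly
  have hpoly := mul_right_cancel₀ (pow_ne_zero _ X_ne_zero) hpoly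
  obtain ⟨k, e, he⟩ := twist_descent σ g hσ hσg hg _ (β * g ^ l / g ^ j) p₁ q₁ rfl hp0 hq0
    (div_ne_zero hb hj) (by
      have hC : C (β * g ^ l) = C (g ^ j) * C (β * g ^ l / g ^ j) := by
        rw [← C_mul]; congr 1; field_simp
      rw [hC, mul_assoc] at hpoly
      exact mul_left_cancel₀ (C_ne_zero.2 hj) hpoly)
  refine ⟨(l : ℤ) - j + k, e, ?_⟩
  rw [← he, zpow_add₀ hg, zpow_sub₀ hg]
  simp only [zpow_natCast]
  ring

/-- untwisted case, constants -/
theorem untwist_const (β : E) (p q : E[X]) (hq : q ≠ 0)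
    (h : C β * (q * q.map σ) = p * p.map σ) : ∃ e : E, β = e * σ e := by
  have := congrArg leadingCoeff h
  simp only [leadingCoeff_mul, leadingCoeff_C, leadingCoeff_map] at this
  have h1 : q.leadingCoeff ≠ 0 := by simpa using hq
  have h2 : σ q.leadingCoeff ≠ 0 := by simpa using hq
  refine ⟨p.leadingCoeff / q.leadingCoeff, ?_⟩
  rw [map_div₀]
  field_simp
  linear_combination this

theorem untwist_prime (hσ : ∀ x, σ (σ x) = x) (G : E[X]) (hG : Prime G) (hGσ : G.map σ = G) (n : ℕ) :
    ∀ (β : E) (p q : E[X]), β ≠ 0 → q ≠ 0 → p.natDegree = n →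
      C β * G * (q * q.map σ) = p * p.map σ → False := by
  induction n using Nat.strong_induction_on with
  | _ n ih =>
  intro β p q hβ hq hn h
  have hσσ : ∀ r : E[X], (r.map σ).map σ = r := by
    intro r; ext i; simp [hσ]
  have hdvd : ∀ r : E[X], G ∣ r * r.map σ → G ∣ r := by
    intro r hr
    rcases hG.dvd_or_dvd hr with h' | h'
    · exact h'
    · have := Polynomial.map_dvd σ h'
      rwa [hσσ, hGσ] at this
  obtain ⟨p₁, rfl⟩ := hdvd p (by rw [← h]; exact Dvd.intro_left (C β * (q * q.map σ)) (by ring))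
  have h1 : C β * (q * q.map σ) = G * (p₁ * p₁.map σ) := by
    refine mul_left_cancel₀ hG.ne_zero ?_
    rw [Polynomial.map_mul, hGσ] at h
    linear_combination h
  obtain ⟨q₁, rfl⟩ := hdvd q (by
    have : G ∣ C β * (q * q.map σ) := by rw [h1]; exact dvd_mul_right _ _
    rcases hG.dvd_or_dvd this with h' | h'
    · exact absurd (isUnit_of_dvd_unit h' (by simpa using hβ)) hG.not_isUnit
    · exact h')
  have h2 : C β * G * (q₁ * q₁.map σ) = p₁ * p₁.map σ := by
    refine mul_left_cancel₀ hG.ne_zero ?_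
    rw [Polynomial.map_mul, hGσ] at h1
    linear_combination h1
  have hq1 : q₁ ≠ 0 := by rintro rfl; simp at hq
  have hp1 : p₁ ≠ 0 := by
    rintro rfl
    have : C β * G * (q₁ * q₁.map σ) ≠ 0 :=
      mul_ne_zero (mul_ne_zero (C_ne_zero.2 hβ) hG.ne_zero)
        (mul_ne_zero hq1 (by simpa using (Polynomial.map_ne_zero (f := σ) hq1)))
    exact this (by rw [h2, zero_mul])
  refine ih p₁.natDegree ?_ β p₁ q₁ hβ hq1 rfl h2
  rw [← hn, natDegree_mul hG.ne_zero hp1]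
  have := hG.irreducible.natDegree_pos
  omega
end twist

open Polynomial

section frame
variable {Ω : Type} [Field Ω]

/-- `β` is a sum of two squares of elements of `K` -/
def SumTwo (K : Subfield Ω) (β : Ω) : Prop := ∃ r ∈ K, ∃ s ∈ K, r ^ 2 + s ^ 2 = β

/-- `K(√-1)` -/
abbrev QE (K : Subfield Ω) : Type := QuadraticAlgebra K (-1) 0

/-- the embedding of `K(√-1)` -/
def qeEmb (I : Ω) (hI : I * I = -1) (K : Subfield Ω) : QE K →+* Ω :=
  (QuadraticAlgebra.lift (R := K) (a := -1) (b := 0) (A := Ω)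
    ⟨I, by rw [hI]; simp⟩ : QE K →ₐ[K] Ω).toRingHom

theorem qeEmb_apply (I : Ω) (hI : I * I = -1) (K : Subfield Ω) (e : QE K) :
    qeEmb I hI K e = e.re + e.im * I := by
  simp [qeEmb, QuadraticAlgebra.lift, Subfield.smul_def]
  try rfl

theorem qeEmb_star (I : Ω) (hI : I * I = -1) (K : Subfield Ω) (e : QE K) :
    qeEmb I hI K (starRingEnd (QE K) e) = e.re - e.im * I := by
  rw [qeEmb_apply, starRingEnd_apply, QuadraticAlgebra.re_star, QuadraticAlgebra.im_star]
  push_cast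
  simp
  ring

theorem qe_norm (K : Subfield Ω) (e f : QE K) (h : f = e * star e) (b : K)
    (hb : f = algebraMap K (QE K) b) : SumTwo K (b : Ω) := by
  refine ⟨e.re, e.re.2, e.im, e.im.2, ?_⟩
  have := congrArg QuadraticAlgebra.re (hb.symm.trans h)
  simp at this
  rw [this]
  push_cast
  ring

theorem sumTwo_of_I (I : Ω) (hI : I * I = -1) (h2 : (2 : Ω) ≠ 0) (K : Subfield Ω) (hIK : I ∈ K) (β : Ω) (hβ : β ∈ K) :
    SumTwo K β := by
  have h2K : (2 : Ω) ∈ K := ofNat_mem K 2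
  refine ⟨(β + 1) / 2, K.div_mem (K.add_mem hβ K.one_mem) h2K, I * (β - 1) / 2,
    K.div_mem (K.mul_mem hIK (K.sub_mem hβ K.one_mem)) h2K, ?_⟩
  field_simp
  linear_combination (β - 1) ^ 2 * hI

theorem eval₂_mem_subfield {E : Type} [Field E] (ι : E →+* Ω) (A : Subfield Ω) (hA : ∀ e, ι e ∈ A)
    (T : Ω) (hT : T ∈ A) (p : E[X]) : p.eval₂ ι T ∈ A := by
  rw [eval₂_eq_sum_range]
  exact A.sum_mem fun i _ => A.mul_mem (hA _) (A.pow_mem hT _)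

theorem eval₂_inj_of_transc {E : Type} [Field E] (ι : E →+* Ω) (A : Subfield Ω) (hA : ∀ e, ι e ∈ A)
    (T : Ω) (hT : Transcendental A T) (p : E[X]) (hp : p.eval₂ ι T = 0) : p = 0 := by
  have h1 : (p.map (ι.codRestrict A hA)).eval₂ (algebraMap A Ω) T = 0 := by
    rw [eval₂_map]
    exact hp
  by_contra hne
  exact hT ⟨p.map (ι.codRestrict A hA), by
    simpa using (Polynomial.map_ne_zero (f := ι.codRestrict A hA) hne), h1⟩

theorem frame (I : Ω) (hI : I * I = -1) (K : Subfield Ω)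
    [hK : Fact (∀ r : K, r ^ 2 ≠ (-1 : K) + 0 * r)] (A : Subfield Ω) (hKA : K ≤ A) (hIA : I ∈ A)
    (T T' : Ω) (hT : Transcendental A T) (hT' : Transcendental A T') :
    ∃ K' : Subfield Ω, K ≤ K' ∧ (∀ B : Subfield Ω, K ≤ B → I ∈ B → T ∈ B → K' ≤ B) ∧
      (T = T' → T ∈ K') ∧ (T * T' ∈ K → T + T' ∈ K' ∧ I * (T - T') ∈ K') ∧
      ∀ r ∈ K', ∀ s ∈ K', ∃ p q : (QE K)[X], q ≠ 0 ∧
        (r ^ 2 + s ^ 2) * (q.eval₂ (qeEmb I hI K) T * (q.map (starRingEnd (QE K))).eval₂ (qeEmb I hI K) T')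
          = p.eval₂ (qeEmb I hI K) T * (p.map (starRingEnd (QE K))).eval₂ (qeEmb I hI K) T' := by
  set ι := qeEmb I hI K with hι
  have hιA : ∀ B : Subfield Ω, K ≤ B → I ∈ B → ∀ e, ι e ∈ B := by
    intro B hB hIB e
    rw [hι, qeEmb_apply]
    exact B.add_mem (hB e.re.2) (B.mul_mem (hB e.im.2) hIB)
  have hinj1 : Function.Injective (eval₂RingHom ι T) := by
    rw [injective_iff_map_eq_zero]
    exact fun p hp => eval₂_inj_of_transc ι A (hιA A hKA hIA) T hT p hp
  have hinj2 : Function.Injective (eval₂RingHom (ι.comp (starRingEnd (QE K))) T') := by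
    rw [injective_iff_map_eq_zero]
    exact fun p hp => eval₂_inj_of_transc (ι.comp (starRingEnd (QE K))) A
      (fun e => hιA A hKA hIA _) T' hT' p hp
  let τ₁ : FractionRing (QE K)[X] →+* Ω := IsFractionRing.lift hinj1
  let τ₂ : FractionRing (QE K)[X] →+* Ω := IsFractionRing.lift hinj2
  have hτ₁ : ∀ p : (QE K)[X], τ₁ (algebraMap _ _ p) = p.eval₂ ι T :=
    fun p => IsFractionRing.lift_algebraMap hinj1 p
  have hτ₂ : ∀ p : (QE K)[X], τ₂ (algebraMap _ _ p) = (p.map (starRingEnd (QE K))).eval₂ ι T' := by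
    intro p
    rw [eval₂_map]
    exact IsFractionRing.lift_algebraMap hinj2 p
  have hmem : ∀ φ, τ₁ φ = τ₂ φ → τ₁ φ ∈ (τ₁.eqLocusField τ₂).map τ₁ :=
    fun φ h => ⟨φ, h, rfl⟩
  let cI : (QE K)[X] := C ⟨0, 1⟩
  have hcI1 : τ₁ (algebraMap _ _ cI) = I := by
    rw [hτ₁, eval₂_C, hι, qeEmb_apply]; simp
  have hcI2 : τ₂ (algebraMap _ _ cI) = - I := by
    rw [hτ₂, map_C, eval₂_C, hι, qeEmb_star]; simp
  have hX1 : τ₁ (algebraMap _ _ (X : (QE K)[X])) = T := by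
    rw [hτ₁, eval₂_X]
  have hX2 : τ₂ (algebraMap _ _ (X : (QE K)[X])) = T' := by
    rw [hτ₂, map_X, eval₂_X]
  have hc1 : ∀ k : K, τ₁ (algebraMap _ _ (C (algebraMap K (QE K) k))) = k := by
    intro k; rw [hτ₁, eval₂_C, hι, qeEmb_apply]; simp
  have hc2 : ∀ k : K, τ₂ (algebraMap _ _ (C (algebraMap K (QE K) k))) = k := by
    intro k; rw [hτ₂, map_C, eval₂_C, hι, qeEmb_star]; simp
  refine ⟨(τ₁.eqLocusField τ₂).map τ₁, ?_, ?_, ?_, ?_, ?_⟩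
  · intro k hk
    have := hmem _ ((hc1 ⟨k, hk⟩).trans (hc2 ⟨k, hk⟩).symm)
    rwa [hc1] at this
  · rintro B hB hIB hTB _ ⟨φ, -, rfl⟩
    obtain ⟨p, q, -, rfl⟩ := IsFractionRing.div_surjective (A := (QE K)[X]) φ
    rw [map_div₀, hτ₁, hτ₁]
    exact B.div_mem (eval₂_mem_subfield ι B (hιA B hB hIB) T hTB p)
      (eval₂_mem_subfield ι B (hιA B hB hIB) T hTB q)
  · intro h
    have := hmem _ ((hX1.trans h).trans hX2.symm)
    rwa [hX1] at this
  · intro hg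
    have hT0 : T ≠ 0 := by
      rintro rfl; exact hT isAlgebraic_zero
    have hT0' : T' ≠ 0 := by
      rintro rfl; exact hT' isAlgebraic_zero
    let ψ : FractionRing (QE K)[X] := algebraMap _ _ (C (algebraMap K (QE K) ⟨T * T', hg⟩)) /
      algebraMap _ _ (X : (QE K)[X])
    have hψ1 : τ₁ ψ = T' := by
      simp only [ψ, map_div₀, hX1, hc1]; field_simp
    have hψ2 : τ₂ ψ = T := by
      simp only [ψ, map_div₀, hX2, hc2]; field_simp
    constructor
    · have := hmem (algebraMap _ _ (X : (QE K)[X]) + ψ) (by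
        rw [map_add, map_add, hX1, hX2, hψ1, hψ2, add_comm])
      rwa [map_add, hX1, hψ1] at this
    · have := hmem (algebraMap _ _ cI * (algebraMap _ _ (X : (QE K)[X]) - ψ)) (by
        rw [map_mul, map_mul, map_sub, map_sub, hX1, hX2, hψ1, hψ2, hcI1, hcI2]; ring)
      rwa [map_mul, map_sub, hX1, hψ1, hcI1] at this
  · rintro _ ⟨φ, hφ, rfl⟩ _ ⟨ψ, hψ, rfl⟩
    have hφ : τ₁ φ = τ₂ φ := hφ
    have hψ : τ₁ ψ = τ₂ ψ := hψ
    obtain ⟨p, q, hq, hpq⟩ := IsFractionRing.div_surjective (A := (QE K)[X]) (φ + algebraMap _ _ cI * ψ)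
    have hq0 : q ≠ 0 := nonZeroDivisors.ne_zero hq
    have hq1 : q.eval₂ ι T ≠ 0 := fun h => hq0 (hinj1 (by rw [map_zero]; exact h))
    have hq2 : (q.map (starRingEnd (QE K))).eval₂ ι T' ≠ 0 := fun h =>
      hq0 (hinj2 (by rw [map_zero]; rw [eval₂_map] at h; exact h))
    refine ⟨p, q, hq0, ?_⟩
    have h1 := congrArg τ₁ hpq
    have h2 := congrArg τ₂ hpq
    rw [map_div₀, hτ₁, hτ₁, map_add, map_mul, hcI1, div_eq_iff hq1] at h1
    rw [map_div₀, hτ₂, hτ₂, map_add, map_mul, hcI2, div_eq_iff hq2, ← hφ, ← hψ] at h2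
    rw [h1, h2]
    linear_combination ((τ₁ ψ) ^ 2 * (eval₂ ι T q * eval₂ ι T' (map (starRingEnd (QE K)) q))) * hI

theorem noI (I : Ω) (hI : I * I = -1) (K : Subfield Ω) (hIK : I ∉ K) :
    Fact (∀ r : K, r ^ 2 ≠ (-1 : K) + 0 * r) := by
  refine ⟨fun r hr => hIK ?_⟩
  have h : (r : Ω) ^ 2 = -1 := by
    have := congrArg (Subtype.val) hr
    simpa using this
  have h2 : ((r : Ω) - I) * (r + I) = 0 := by linear_combination h - hI
  rcases mul_eq_zero.1 h2 with h3 | h3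
  · rw [← sub_eq_zero.1 h3]; exact r.2
  · rw [← neg_eq_of_add_eq_zero_right h3]; exact K.neg_mem r.2

theorem qeEmb_inj (I : Ω) (hI : I * I = -1) (K : Subfield Ω) (hIK : I ∉ K) :
    Function.Injective (qeEmb I hI K) := by
  have := noI I hI K hIK
  exact RingHom.injective _

/-- the conic step -/
theorem conic_step (I : Ω) (hI : I * I = -1) (h2 : (2 : Ω) ≠ 0) (K : Subfield Ω) (hIK : I ∉ K)
    (A : Subfield Ω) (hKA : K ≤ A) (hIA : I ∈ A) (T : Ω) (hT : Transcendental A T)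
    (g : Ω) (hg : g ≠ 0) (hgK : g ∈ K) :
    ∃ K' : Subfield Ω, K ≤ K' ∧ (∀ B : Subfield Ω, K ≤ B → I ∈ B → T ∈ B → K' ≤ B) ∧
      SumTwo K' g ∧ ∀ β ∈ K, β ≠ 0 → SumTwo K' β → SumTwo K β ∨ SumTwo K (β * g) := by
  have hfact := noI I hI K hIK
  have hT0 : T ≠ 0 := by
    rintro rfl; exact hT isAlgebraic_zero
  have hT' : Transcendental A (g / T) := by
    intro h
    apply hT
    have h1 : T = g * (g / T)⁻¹ := by field_simp
    rw [h1]
    exact (isAlgebraic_algebraMap (R := A) (A := Ω) ⟨g, hKA hgK⟩).mul h.inv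
  obtain ⟨K', hKK', hB, -, hyz, hss⟩ := frame I hI K A hKA hIA T (g / T) hT hT'
  obtain ⟨hy, hz⟩ := hyz (by rwa [mul_div_cancel₀ _ hT0])
  refine ⟨K', hKK', hB, ?_, ?_⟩
  · have h2K : (2 : Ω) ∈ K' := ofNat_mem K' 2
    refine ⟨_, K'.div_mem hy h2K, _, K'.div_mem hz h2K, ?_⟩
    field_simp
    linear_combination ((T ^ 2 - g) ^ 2) * hI
  · rintro β hβK hβ ⟨r, hr, s, hs, hrs⟩
    obtain ⟨p, q, hq, hpq⟩ := hss r hr s hs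
    rw [hrs] at hpq
    have hc : ∀ k : K, qeEmb I hI K (algebraMap K (QE K) k) = k := by
      intro k; rw [qeEmb_apply]; simp
    have hιA : ∀ e, qeEmb I hI K e ∈ A := by
      intro e
      rw [qeEmb_apply]
      exact A.add_mem (hKA e.re.2) (A.mul_mem (hKA e.im.2) hIA)
    have hg0 : algebraMap K (QE K) ⟨g, hgK⟩ ≠ 0 := by
      rw [Ne, map_eq_zero]; exact fun h => hg (congrArg Subtype.val h)
    have hβ0 : algebraMap K (QE K) ⟨β, hβK⟩ ≠ 0 := by
      rw [Ne, map_eq_zero]; exact fun h => hβ (congrArg Subtype.val h)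
    obtain ⟨k, e, he⟩ := twist_descent' (starRingEnd (QE K)) (algebraMap K (QE K) ⟨g, hgK⟩)
      (fun x => star_star x) (by ext <;> simp [starRingEnd_apply]) hg0
      (algebraMap K (QE K) ⟨β, hβK⟩) hβ0 (qeEmb I hI K) T
      (fun p hp => eval₂_inj_of_transc _ A hιA T hT p hp) p q hq (by rw [hc, hc]; exact hpq)
    rw [← map_zpow₀, ← map_mul] at he
    have key : SumTwo K (β * g ^ k) := by
      have := qe_norm K e _ he _ rfl
      have hco : (((⟨g, hgK⟩ : K) ^ k : K) : Ω) = g ^ k := map_zpow₀ K.subtype _ _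
      rw [Subfield.coe_mul, hco] at this
      exact this
    obtain ⟨u, hu, v, hv, huv⟩ := key
    rcases Int.even_or_odd' k with ⟨l, rfl | rfl⟩
    · left
      refine ⟨u / g ^ l, K.div_mem hu (K.zpow_mem hgK _), v / g ^ l, K.div_mem hv (K.zpow_mem hgK _), ?_⟩
      have : g ^ l ≠ 0 := zpow_ne_zero _ hg
      rw [two_mul, zpow_add₀ hg] at huv
      field_simp
      linear_combination huv
    · right
      refine ⟨u / g ^ l, K.div_mem hu (K.zpow_mem hgK _), v / g ^ l, K.div_mem hv (K.zpow_mem hgK _), ?_⟩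
      have : g ^ l ≠ 0 := zpow_ne_zero _ hg
      rw [two_mul, zpow_add₀ hg, zpow_add₀ hg, zpow_one] at huv
      field_simp
      linear_combination huv

/-- adjoining a transcendental element -/
theorem transc_step (I : Ω) (hI : I * I = -1) (h2 : (2 : Ω) ≠ 0) (K : Subfield Ω) (hIK : I ∉ K)
    (A : Subfield Ω) (hKA : K ≤ A) (hIA : I ∈ A) (x : Ω) (hx : Transcendental A x)
    (d : Ω) (hdK : d ∈ K) (hd1 : ∀ u ∈ K, u ^ 2 ≠ d) (hd2 : ∀ u ∈ K, u ^ 2 ≠ -d) :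
    ∃ K' : Subfield Ω, K ≤ K' ∧ (∀ B : Subfield Ω, K ≤ B → I ∈ B → x ∈ B → K' ≤ B) ∧
      x ∈ K' ∧ (∀ β ∈ K, SumTwo K' β → SumTwo K β) ∧
      ∀ β ∈ K, β ≠ 0 → ¬ SumTwo K' (β * (d + x ^ 2)) := by
  have hfact := noI I hI K hIK
  obtain ⟨K', hKK', hB, hxK, -, hss⟩ := frame I hI K A hKA hIA x x hx hx
  have hc : ∀ k : K, qeEmb I hI K (algebraMap K (QE K) k) = k := by
    intro k; rw [qeEmb_apply]; simp
  have hιA : ∀ e, qeEmb I hI K e ∈ A := by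
    intro e
    rw [qeEmb_apply]
    exact A.add_mem (hKA e.re.2) (A.mul_mem (hKA e.im.2) hIA)
  have hinj : ∀ p q : (QE K)[X], p.eval₂ (qeEmb I hI K) x = q.eval₂ (qeEmb I hI K) x → p = q := by
    intro p q h
    rw [← sub_eq_zero]
    refine eval₂_inj_of_transc _ A hιA x hx _ ?_
    rw [eval₂_sub, h, sub_self]
  refine ⟨K', hKK', hB, hxK rfl, ?_, ?_⟩
  · rintro β hβK ⟨r, hr, s, hs, hrs⟩
    obtain ⟨p, q, hq, hpq⟩ := hss r hr s hs
    rw [hrs] at hpq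
    obtain ⟨e, he⟩ := untwist_const (starRingEnd (QE K)) (algebraMap K (QE K) ⟨β, hβK⟩) p q hq
      (hinj _ _ (by simp only [eval₂_mul, eval₂_C, hc]; exact hpq))
    exact qe_norm K e _ he _ rfl
  · rintro β hβK hβ ⟨r, hr, s, hs, hrs⟩
    obtain ⟨p, q, hq, hpq⟩ := hss r hr s hs
    rw [hrs] at hpq
    have hβ0 : algebraMap K (QE K) ⟨β, hβK⟩ ≠ 0 := by
      rw [Ne, map_eq_zero]; exact fun h => hβ (congrArg Subtype.val h)
    have hirr : Irreducible (X ^ 2 - C (algebraMap K (QE K) ⟨-d, K.neg_mem hdK⟩)) := by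
      refine X_pow_sub_C_irreducible_of_prime Nat.prime_two ?_
      intro e he
      rw [pow_two] at he
      replace he := he.symm
      have h1 := congrArg (fun z => (z.re : Ω)) he
      have h3 := congrArg (fun z => (z.im : Ω)) he
      simp at h1 h3
      have h4 : (e.re : Ω) * e.im = 0 := by
        have : (2 : Ω) * (e.re * e.im) = 0 := by linear_combination -h3
        simpa [h2] using this
      rcases mul_eq_zero.1 h4 with h5 | h5
      · exact hd1 e.im e.im.2 (by rw [h5] at h1; linear_combination h1)
      · exact hd2 e.re e.re.2 (by rw [h5] at h1; linear_combination -h1)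
    refine untwist_prime (starRingEnd (QE K)) (fun x => star_star x) _ hirr.prime ?_ _
      (algebraMap K (QE K) ⟨β, hβK⟩) p q hβ0 hq rfl
      (hinj _ _ (by
        simp only [eval₂_mul, eval₂_sub, eval₂_pow, eval₂_X, eval₂_C, hc]
        rw [← hpq]; ring))
    rw [Polynomial.map_sub, Polynomial.map_pow, map_X, map_C]
    congr 2
    ext <;> simp [starRingEnd_apply]
end frame

open Polynomial

theorem exists_tower : ∃ (Ω : Type) (_ : Field Ω) (_ : CharZero Ω) (_ : Countable Ω) (I : Ω)
    (A : ℕ → Subfield Ω) (X : ℕ → Ω), I * I = -1 ∧ Monotone A ∧ (∀ n, I ∈ A n) ∧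
      (∀ n, X n ∈ A (n + 1)) ∧ ∀ n, Transcendental (A n) (X n) := by
  let R := MvPolynomial ℕ ℚ
  let F := FractionRing R
  let Ω := AlgebraicClosure F
  have : Countable R := by
    rw [← Cardinal.mk_le_aleph0_iff]
    refine (MvPolynomial.cardinalMk_le_max (σ := ℕ) (R := ℚ)).trans ?_
    simp
  have hcF : Countable F := by
    have : Function.Surjective (fun p : R × nonZeroDivisors R => IsLocalization.mk' F p.1 p.2) := by
      intro z
      obtain ⟨x, y, h⟩ := IsLocalization.exists_mk'_eq (nonZeroDivisors R) z
      exact ⟨(x, y), h⟩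
    exact this.countable
  have hcO : Countable Ω := by
    rw [← Cardinal.mk_le_aleph0_iff]
    refine (Algebra.IsAlgebraic.cardinalMk_le_max F Ω).trans ?_
    simp
  have : CharZero Ω := charZero_of_injective_algebraMap (algebraMap F Ω).injective
  obtain ⟨I, hI⟩ := IsAlgClosed.exists_pow_nat_eq (-1 : Ω) (n := 2) (by norm_num)
  let X : ℕ → Ω := fun n => algebraMap R Ω (MvPolynomial.X n)
  have hX : AlgebraicIndependent ℚ X := by
    have h := (MvPolynomial.algebraicIndependent_X ℕ ℚ).map' (f := IsScalarTower.toAlgHom ℚ R Ω) (by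
      show Function.Injective (algebraMap R Ω)
      rw [IsScalarTower.algebraMap_eq R F Ω]
      exact (algebraMap F Ω).injective.comp (IsFractionRing.injective R F))
    exact h
  let B : ℕ → IntermediateField ℚ Ω := fun n => IntermediateField.adjoin ℚ (X '' {j | j < n})
  let A : ℕ → Subfield Ω := fun n => (algebraicClosure (B n) Ω).toSubfield
  have hmem : ∀ n z, z ∈ A n ↔ IsAlgebraic (B n) z := fun n z => mem_algebraicClosure_iff
  have hBm : Monotone B := by
    intro a b hab
    apply IntermediateField.adjoin.mono
    apply Set.image_mono
    intro j hj
    exact lt_of_lt_of_le hj hab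
  refine ⟨Ω, inferInstance, inferInstance, hcO, I, A, X, by rw [← sq, hI], ?_, ?_, ?_, ?_⟩
  · intro a b hab z hz
    rw [hmem] at hz ⊢
    let : Algebra (B a) (B b) := (IntermediateField.inclusion (hBm hab)).toRingHom.toAlgebra
    have : IsScalarTower (B a) (B b) Ω := .of_algebraMap_eq fun _ => rfl
    exact hz.tower_top (B b)
  · intro n
    rw [hmem]
    refine ⟨Polynomial.X ^ 2 + 1, (by
      have : (Polynomial.X ^ 2 + C (1 : B n)).Monic := by monicity!
      simpa using this.ne_zero), ?_⟩
    simp [hI]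
  · intro n
    rw [hmem]
    exact isAlgebraic_algebraMap (⟨X n, IntermediateField.subset_adjoin _ _ ⟨n, by simp, rfl⟩⟩ : B (n + 1))
  · intro n
    have h1 : Transcendental (B n) (X n) := by
      rw [IntermediateField.transcendental_adjoin_iff]
      exact hX.transcendental_adjoin (by simp)
    exact h1.extendScalars (algebraicClosure (B n) Ω)

def GoodP {Ω : Type} [Field Ω] (K : Subfield Ω) : Prop :=
  ¬ SumTwo K 3 ∧ ¬ SumTwo K 7 ∧ ¬ SumTwo K 21

def Resd {Ω : Type} [Field Ω] (K : Subfield Ω) (d m : Ω) : Prop :=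
  (∃ u ∈ K, u ^ 2 = d) ∨ ∃ x ∈ K, ∃ y ∈ K, ∃ z ∈ K, d = -(x ^ 2) + m * (y ^ 2 + z ^ 2)

theorem good_step {Ω : Type} [Field Ω] [CharZero Ω] (I : Ω)
    (A : ℕ → Subfield Ω) (X : ℕ → Ω) (hI : I * I = -1) (hA : Monotone A) (hIA : ∀ n, I ∈ A n)
    (hXA : ∀ n, X n ∈ A (n + 1)) (hX : ∀ n, Transcendental (A n) (X n))
    (K : Subfield Ω) (hK : GoodP K) (n : ℕ) (hn : K ≤ A n) (d : Ω) (hd : d ∈ K) (m : ℕ)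
    (hm : m = 3 ∨ m = 7) :
    ∃ K', K ≤ K' ∧ GoodP K' ∧ K' ≤ A (n + 2) ∧ Resd K' d m := by
  have h2 : (2 : Ω) ≠ 0 := two_ne_zero
  have nat_mem : ∀ (L : Subfield Ω) (k : ℕ), (k : Ω) ∈ L := fun L k => natCast_mem L k
  have hIK : ∀ L : Subfield Ω, ¬ SumTwo L 3 → I ∉ L := fun L hL h =>
    hL (sumTwo_of_I I hI h2 L h 3 (by simpa using nat_mem L 3))
  by_cases hd1 : ∀ u ∈ K, u ^ 2 ≠ d
  swap
  · push Not at hd1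
    exact ⟨K, le_rfl, hK, hn.trans (hA (by lia)), Or.inl hd1⟩
  by_cases hd2 : ∀ u ∈ K, u ^ 2 ≠ -d
  swap
  · push Not at hd2
    obtain ⟨u, hu, hud⟩ := hd2
    exact ⟨K, le_rfl, hK, hn.trans (hA (by lia)), Or.inr ⟨u, hu, 0, K.zero_mem, 0, K.zero_mem, by
      linear_combination hud⟩⟩
  obtain ⟨L, hKL, hLB, hxL, hL1, hL2⟩ := transc_step I hI h2 K (hIK K hK.1) (A n) hn (hIA n) (X n)
    (hX n) d hd hd1 hd2
  have hLA : L ≤ A (n + 1) := hLB _ (hn.trans (hA (by lia))) (hIA _) (hXA n)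
  have hm0 : (m : Ω) ≠ 0 := by rcases hm with rfl | rfl <;> norm_num
  have hs0 : d + X n ^ 2 ≠ 0 := by
    intro h
    exact hL2 1 K.one_mem one_ne_zero ⟨0, L.zero_mem, 0, L.zero_mem, by rw [h]; ring⟩
  have hIL : I ∉ L := hIK L fun h => hK.1 (hL1 3 (by simpa using nat_mem K 3) h)
  obtain ⟨K', hLK', hK'B, ⟨r, hr, s, hs, hrs⟩, hK'⟩ := conic_step I hI h2 L hIL (A (n + 1)) hLA
    (hIA _) (X (n + 1)) (hX _) (m * (d + X n ^ 2)) (mul_ne_zero hm0 hs0)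
    (L.mul_mem (nat_mem L m) (L.add_mem (hKL hd) (L.pow_mem hxL 2)))
  have key : ∀ b : ℕ, b ≠ 0 → ¬ SumTwo K (b : Ω) → ¬ SumTwo K' (b : Ω) := by
    intro b hb hbK h
    have hb' : (b : Ω) ≠ 0 := by exact_mod_cast hb
    rcases hK' b (nat_mem L b) hb' h with h | h
    · exact hbK (hL1 _ (nat_mem K b) h)
    · refine hL2 (b * m) (K.mul_mem (nat_mem K b) (nat_mem K m)) (mul_ne_zero hb' hm0) ?_
      rwa [mul_assoc]
  refine ⟨K', hKL.trans hLK', ⟨?_, ?_, ?_⟩, ?_, Or.inr ⟨X n, hLK' hxL, r / m,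
    K'.div_mem hr (nat_mem K' m), s / m, K'.div_mem hs (nat_mem K' m), ?_⟩⟩
  · simpa using key 3 (by norm_num) (by simpa using hK.1)
  · simpa using key 7 (by norm_num) (by simpa using hK.2.1)
  · simpa using key 21 (by norm_num) (by simpa using hK.2.2)
  · exact hK'B _ (hLA.trans (hA (by lia))) (hIA _) (hXA _)
  · field_simp
    linear_combination -hrs

theorem rat_not_sum (p k : ℕ) (hp : p.Prime) (hp4 : p % 4 = 3) (hk : ¬ p ∣ k) (r s : ℚ) :
    r ^ 2 + s ^ 2 ≠ (p * k : ℕ) := by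
  intro h
  have h0 : k ≠ 0 := by rintro rfl; simp at hk
  have hi : (r.num * s.den) ^ 2 + (s.num * r.den) ^ 2 = (p * k : ℕ) * (r.den * s.den) ^ 2 := by
    have hr : (r.den : ℚ) ≠ 0 := by exact_mod_cast r.den_nz
    have hs : (s.den : ℚ) ≠ 0 := by exact_mod_cast s.den_nz
    rw [← Rat.num_div_den r, ← Rat.num_div_den s] at h
    field_simp at h
    have : ((r.num * s.den) ^ 2 + (s.num * r.den) ^ 2 : ℚ) = (p * k : ℕ) * (r.den * s.den) ^ 2 := by
      linear_combination h
    exact_mod_cast this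
  have hn : p * k * (r.den * s.den) ^ 2 = (r.num * s.den).natAbs ^ 2 + (s.num * r.den).natAbs ^ 2 := by
    zify
    simp only [sq_abs]
    rw [hi]; push_cast; ring
  have hev := Nat.eq_sq_add_sq_iff.1 ⟨_, _, hn⟩ (q := p) (by
    simp [hp, h0, hp.ne_zero, r.den_nz, s.den_nz, mul_assoc]) hp4
  have := Fact.mk hp
  rw [padicValNat.mul (by simp [hp.ne_zero, h0]) (by simp), padicValNat.mul hp.ne_zero h0, padicValNat.pow,
    padicValNat.self hp.one_lt, padicValNat.eq_zero_of_not_dvd hk] at hev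
  rw [Nat.even_iff] at hev
  lia

theorem exists_field : ∃ (K : Type) (_ : Field K), CharZero K ∧
    (∀ r s : K, r ^ 2 + s ^ 2 ≠ 3) ∧ (∀ r s : K, r ^ 2 + s ^ 2 ≠ 7) ∧
    (∀ r s : K, r ^ 2 + s ^ 2 ≠ 21) ∧
    ∀ d : K, (∀ u, u ^ 2 ≠ d) → ∀ m : ℕ, m = 3 ∨ m = 7 →
      ∃ x y z : K, d = -(x ^ 2) + m * (y ^ 2 + z ^ 2) := by
  obtain ⟨Ω, _, _, _, I, A, X, hI, hA, hIA, hXA, hX⟩ := exists_tower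
  let P := {K : Subfield Ω // GoodP K ∧ ∃ n, K ≤ A n}
  have := Encodable.ofCountable (Ω × Bool)
  let mm : Bool → ℕ := fun b => if b then 3 else 7
  have hmm : ∀ b, mm b = 3 ∨ mm b = 7 := by intro b; cases b <;> simp [mm]
  let D : Ω × Bool → Order.Cofinal P := fun t =>
    { carrier := {K | (∀ K' : P, K ≤ K' → t.1 ∉ K'.1) ∨ Resd K.1 t.1 (mm t.2)}
      isCofinal := by
        intro K
        by_cases h : ∀ K' : P, K ≤ K' → t.1 ∉ K'.1
        · exact ⟨K, Or.inl h, le_rfl⟩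
        · push Not at h
          obtain ⟨K', hKK', ht⟩ := h
          obtain ⟨hg, n, hn⟩ := K'.2
          obtain ⟨K2, h1, h3, h4, h5⟩ := good_step I A X hI hA hIA hXA hX K'.1 hg n hn t.1 ht
            (mm t.2) (hmm _)
          exact ⟨⟨K2, h3, _, h4⟩, Or.inr h5, hKK'.trans h1⟩ }
  have hbot : GoodP (⊥ : Subfield Ω) := by
    have key : ∀ p k : ℕ, p.Prime → p % 4 = 3 → ¬ p ∣ k → ¬ SumTwo (⊥ : Subfield Ω) ((p * k : ℕ) : Ω) := by
      rintro p k hp hp4 hk ⟨r, hr, s, hs, h⟩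
      have hle : (⊥ : Subfield Ω) ≤ (algebraMap ℚ Ω).fieldRange := bot_le
      obtain ⟨r, rfl⟩ := hle hr
      obtain ⟨s, rfl⟩ := hle hs
      apply rat_not_sum p k hp hp4 hk r s
      apply (algebraMap ℚ Ω).injective
      simpa using h
    refine ⟨?_, ?_, ?_⟩
    · simpa using key 3 1 (by norm_num) (by norm_num) (by norm_num)
    · simpa using key 7 1 (by norm_num) (by norm_num) (by norm_num)
    · have := key 3 7 (by norm_num) (by norm_num) (by norm_num)
      norm_num at this
      exact this
  let p0 : P := ⟨⊥, hbot, 0, bot_le⟩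
  let S := Order.sequenceOfCofinals p0 D
  have hS : Monotone S := Order.sequenceOfCofinals.monotone p0 D
  let K : Subfield Ω := ⨆ n, (S n).1
  have hmem : ∀ z, z ∈ K ↔ ∃ n, z ∈ (S n).1 := fun z =>
    Subfield.mem_iSup_of_directed (Monotone.directed_le (fun a b hab => hS hab))
  have hno : ∀ b : ℕ, (∀ n, ¬ SumTwo (S n).1 (b : Ω)) → ∀ r s : K, r ^ 2 + s ^ 2 ≠ (b : K) := by
    intro b hb r s h
    obtain ⟨n1, h1⟩ := (hmem _).1 r.2
    obtain ⟨n2, h2⟩ := (hmem _).1 s.2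
    exact hb (max n1 n2) ⟨r, hS (le_max_left _ _) h1, s, hS (le_max_right _ _) h2, by
      simpa using congrArg (Subtype.val) h⟩
  refine ⟨K, inferInstance, inferInstance, ?_, ?_, ?_, ?_⟩
  · simpa using hno 3 fun n => by simpa using (S n).2.1.1
  · simpa using hno 7 fun n => by simpa using (S n).2.1.2.1
  · simpa using hno 21 fun n => by simpa using (S n).2.1.2.2
  · intro d hd m hm
    obtain ⟨b, rfl⟩ : ∃ b, mm b = m := by
      rcases hm with rfl | rfl
      · exact ⟨true, rfl⟩
      · exact ⟨false, rfl⟩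
    have hle : ∀ n, (S n).1 ≤ K := fun n => le_iSup (fun n => (S n).1) n
    obtain ⟨n, hn⟩ := (hmem _).1 d.2
    rcases Order.sequenceOfCofinals.encode_mem p0 D (d.1, b) with h | h
    · exact absurd (hS (le_max_left n _) hn) (h (S (max n _)) (hS (le_max_right _ _)))
    · rcases h with ⟨u, hu, hud⟩ | ⟨x, hx, y, hy, z, hz, h⟩
      · exact absurd (Subtype.ext hud) (hd ⟨u, hle _ hu⟩)
      · exact ⟨⟨x, hle _ hx⟩, ⟨y, hle _ hy⟩, ⟨z, hle _ hz⟩, Subtype.ext (by simpa using h)⟩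


theorem quat_isUnit {K : Type} [Field K] [CharZero K] (m : K) (hm : ∀ r s : K, r ^ 2 + s ^ 2 ≠ m)
    (x : QuaternionAlgebra K (-1) 0 m) : IsUnit x ∨ x = 0 := by
  have hI : ∀ t : K, t ^ 2 ≠ -1 := by
    intro t ht
    apply hm ((m + 1) / 2) (t * ((m - 1) / 2))
    linear_combination (m - 1) ^ 2 / 4 * ht
  have hs : ∀ a b : K, a ^ 2 + b ^ 2 = 0 → a = 0 ∧ b = 0 := by
    intro a b h
    have ha : a = 0 := by
      by_contra ha
      apply hI (b / a)
      field_simp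
      linear_combination h
    refine ⟨ha, ?_⟩
    rw [ha] at h
    simpa using h
  by_cases hn : x.re ^ 2 + x.imI ^ 2 - m * (x.imJ ^ 2 + x.imK ^ 2) = 0
  · right
    have h1 : x.imJ ^ 2 + x.imK ^ 2 = 0 := by
      by_contra h1
      apply hm ((x.re * x.imJ + x.imI * x.imK) / (x.imJ ^ 2 + x.imK ^ 2))
        ((x.re * x.imK - x.imI * x.imJ) / (x.imJ ^ 2 + x.imK ^ 2))
      field_simp
      linear_combination (x.imJ ^ 2 + x.imK ^ 2) * hn
    rw [h1, mul_zero, sub_zero] at hn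
    obtain ⟨h2, h3⟩ := hs _ _ h1
    obtain ⟨h4, h5⟩ := hs _ _ hn
    ext <;> simp [*]
  · left
    set n := x.re ^ 2 + x.imI ^ 2 - m * (x.imJ ^ 2 + x.imK ^ 2) with hndef
    refine ⟨⟨x, ⟨x.re / n, -x.imI / n, -x.imJ / n, -x.imK / n⟩, ?_, ?_⟩, rfl⟩ <;>
    · ext <;> simp <;> field_simp <;> simp only [hndef] <;> ring

theorem quat_center {K : Type} [Field K] [CharZero K] (m : K) :
    Subalgebra.center K (QuaternionAlgebra K (-1) 0 m) = ⊥ := by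
  rw [eq_bot_iff]
  intro x hx
  rw [Subalgebra.mem_center_iff] at hx
  have h1 := hx ⟨0, 1, 0, 0⟩
  have h2 := hx ⟨0, 0, 1, 0⟩
  have a1 := congrArg QuaternionAlgebra.imK h1
  have a2 := congrArg QuaternionAlgebra.imJ h1
  have a3 := congrArg QuaternionAlgebra.imK h2
  simp at a1 a2 a3
  have e1 : x.imJ = 0 := by linear_combination (1 / 2 : K) * a1
  have e2 : x.imK = 0 := by linear_combination (-1 / 2 : K) * a2
  have e3 : x.imI = 0 := by linear_combination (-1 / 2 : K) * a3
  rw [Algebra.mem_bot]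
  refine ⟨x.re, ?_⟩
  ext <;> simp [e1, e2, e3]

theorem quat_embed {K : Type} [Field K] [CharZero K] (m : K)
    (hrep : ∀ d : K, (∀ u, u ^ 2 ≠ d) → ∃ x y z : K, d = -(x ^ 2) + m * (y ^ 2 + z ^ 2))
    (F : Type) [Field F] [Algebra K F] (hF : Module.finrank K F = 2) :
    Nonempty (F →ₐ[K] QuaternionAlgebra K (-1) 0 m) := by
  obtain ⟨θ, hθ⟩ : ∃ θ : F, ∀ k : K, algebraMap K F k ≠ θ := by
    by_contra h
    push Not at h
    have : (⊥ : Subalgebra K F) = ⊤ := by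
      rw [eq_top_iff]; intro z _; exact Algebra.mem_bot.2 (h z)
    have := Subalgebra.bot_eq_top_iff_finrank_eq_one.1 this
    lia
  have hli : LinearIndependent K ![(1 : F), θ] := by
    rw [LinearIndependent.pair_iff]
    intro s t hst
    have ht : t = 0 := by
      by_contra ht
      apply hθ (-s / t)
      have ht' : algebraMap K F t ≠ 0 := by simpa using ht
      rw [Algebra.smul_def, Algebra.smul_def] at hst
      rw [map_div₀, map_neg]
      field_simp
      linear_combination -hst
    refine ⟨?_, ht⟩
    simpa [ht] using hst
  have hfin : FiniteDimensional K F := Module.finite_of_finrank_eq_succ hF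
  have hsp := hli.span_eq_top_of_card_eq_finrank' (by simp [hF])
  have hmem : θ ^ 2 ∈ Submodule.span K (Set.range ![(1 : F), θ]) := by rw [hsp]; trivial
  simp only [Matrix.range_cons, Matrix.range_empty, Set.union_empty, Set.singleton_union] at hmem
  obtain ⟨a, b, hab⟩ := Submodule.mem_span_pair.1 hmem
  rw [Algebra.smul_def, Algebra.smul_def] at hab
  let d : K := a + b ^ 2 / 4
  let α : F := θ - algebraMap K F (b / 2)
  have hα : α * α = algebraMap K F d := by
    simp only [α, d, map_add, map_div₀, map_pow, map_ofNat]
    have : (algebraMap K F 4) = 4 := map_ofNat _ 4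
    have : (algebraMap K F 2) = 2 := map_ofNat _ 2
    have : CharZero F := charZero_of_injective_algebraMap (algebraMap K F).injective
    field_simp
    linear_combination -16 * hab
  have hαK : ∀ k, algebraMap K F k ≠ α := by
    intro k hk
    apply hθ (k + b / 2)
    rw [map_add, hk]; simp [α]
  have hd : ∀ u, u ^ 2 ≠ d := by
    intro u hu
    rw [← hu, map_pow, sq] at hα
    rcases mul_self_eq_mul_self_iff.1 hα with h | h
    · exact hαK u h.symm
    · exact hαK (-u) (by rw [h, map_neg])
  obtain ⟨x, y, z, hxyz⟩ := hrep d hd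
  let f : QuadraticAlgebra K d 0 →ₐ[K] F := QuadraticAlgebra.lift ⟨α, by
    rw [hα, Algebra.smul_def]; simp⟩
  let g : QuadraticAlgebra K d 0 →ₐ[K] QuaternionAlgebra K (-1) 0 m :=
    QuadraticAlgebra.lift ⟨⟨0, x, y, z⟩, by
      ext <;> simp
      · rw [hxyz]; ring
      all_goals ring⟩
  have hfi : Function.Injective f := by
    rw [injective_iff_map_eq_zero]
    intro w hw
    have hw' : w.re • (1 : F) + w.im • α = 0 := hw
    rw [Algebra.smul_def, Algebra.smul_def] at hw'
    have him : w.im = 0 := by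
      by_contra ht
      apply hαK (-w.re / w.im)
      have ht' : algebraMap K F w.im ≠ 0 := by simpa using ht
      rw [map_div₀, map_neg]
      field_simp
      linear_combination -hw'
    have hre : w.re = 0 := by simpa [him] using hw'
    ext <;> simp [him, hre]
  have hfs : Function.Surjective f := by
    have h := LinearMap.injective_iff_surjective_of_finrank_eq_finrank (f := f.toLinearMap)
      (by rw [hF, QuadraticAlgebra.finrank_eq_two])
    exact h.1 hfi
  exact ⟨g.comp (AlgEquiv.ofBijective f ⟨hfi, hfs⟩).symm.toAlgHom⟩

theorem quat_noniso {K : Type} [Field K] [CharZero K]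
    (h7 : ∀ r s : K, r ^ 2 + s ^ 2 ≠ 7) (h21 : ∀ r s : K, r ^ 2 + s ^ 2 ≠ 21) :
    IsEmpty (QuaternionAlgebra K (-1) 0 3 ≃ₐ[K] QuaternionAlgebra K (-1) 0 7) := by
  refine ⟨fun φ => ?_⟩
  let i1 : QuaternionAlgebra K (-1) 0 3 := ⟨0, 1, 0, 0⟩
  let j1 : QuaternionAlgebra K (-1) 0 3 := ⟨0, 0, 1, 0⟩
  let i : QuaternionAlgebra K (-1) 0 7 := ⟨0, 1, 0, 0⟩
  let j : QuaternionAlgebra K (-1) 0 7 := ⟨0, 0, 1, 0⟩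
  have e1 : i1 * i1 = -1 := by ext <;> simp [i1]
  have e2 : j1 * j1 = algebraMap K _ 3 := by ext <;> simp [j1, -QuaternionAlgebra.coe_ofNat]
  have e3 : i1 * j1 = -(j1 * i1) := by ext <;> simp [i1, j1]
  have e4 : i * i = -1 := by ext <;> simp [i]
  have e5 : i * j = -(j * i) := by ext <;> simp [i, j]
  have f1 : φ i1 * φ i1 = -1 := by rw [← map_mul, e1]; simp
  have f2 : φ j1 * φ j1 = algebraMap K _ 3 := by rw [← map_mul, e2, AlgEquiv.commutes]
  have f3 : φ i1 * φ j1 = -(φ j1 * φ i1) := by rw [← map_mul, e3]; simp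
  generalize φ i1 = I at *
  generalize φ j1 = J at *
  obtain ⟨u, hu, hiu⟩ : ∃ u : QuaternionAlgebra K (-1) 0 7, u ≠ 0 ∧ i * u = u * I := by
    by_cases h : i + I = 0
    · refine ⟨j, ?_, ?_⟩
      · intro h
        simpa [j] using congrArg QuaternionAlgebra.imJ h
      · rw [eq_neg_of_add_eq_zero_right h, e5, mul_neg]
    · exact ⟨i + I, h, by rw [mul_add, add_mul, e4, f1, add_comm]⟩
  obtain ⟨v, hv⟩ := (quat_isUnit 7 h7 u).resolve_right hu
  subst hv
  have hIv : I * (↑v⁻¹ : QuaternionAlgebra K (-1) 0 7) = ↑v⁻¹ * i := by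
    rw [Units.mul_inv_eq_iff_eq_mul, mul_assoc, hiu, Units.inv_mul_cancel_left]
  let w : QuaternionAlgebra K (-1) 0 7 := v * J * ↑v⁻¹
  have hw1 : i * w = -(w * i) := by
    calc i * w = (i * v) * J * ↑v⁻¹ := by simp only [w, mul_assoc]
      _ = v * (I * J) * ↑v⁻¹ := by rw [hiu]; simp only [mul_assoc]
      _ = -(v * J * (I * ↑v⁻¹)) := by rw [f3]; simp only [mul_assoc, mul_neg, neg_mul]
      _ = -(w * i) := by rw [hIv]; simp only [w, mul_assoc]
  have hw2 : w * w = algebraMap K _ 3 := by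
    calc w * w = v * (J * J) * ↑v⁻¹ := by
          simp only [w, mul_assoc, Units.inv_mul_cancel_left]
      _ = algebraMap K _ 3 := by
          rw [f2, ← Algebra.commutes, mul_assoc, Units.mul_inv, mul_one]
  generalize w = w at *
  have a1 := congrArg QuaternionAlgebra.imI hw1
  have a2 := congrArg QuaternionAlgebra.re hw1
  have a3 := congrArg QuaternionAlgebra.re hw2
  simp [i, -QuaternionAlgebra.coe_ofNat] at a1 a2 a3
  have b1 : w.re = 0 := by linear_combination (1 / 2 : K) * a1
  have b2 : w.imI = 0 := by linear_combination (-1 / 2 : K) * a2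
  rw [b1, b2] at a3
  apply h21 (7 * w.imJ) (7 * w.imK)
  linear_combination 7 * a3

/-- there exist a field `K` of characteristic 0 and two quaternion division
algebras over `K` (central division `K`-algebras of degree 2) which are not `K`-isomorphic
but have the same quadratic subfields; in particular the genus of a quaternion division
algebra can contain more than one class. -/
theorem exists_nonisomorphic_quaternion_algebras_with_same_quadratic_subfields :
    ∃ (K : Type) (_ : Field K), CharZero K ∧
      ∃ (D₁ D₂ : Type) (_ : DivisionRing D₁) (_ : Algebra K D₁)
        (_ : DivisionRing D₂) (_ : Algebra K D₂),
        FiniteDimensional K D₁ ∧ Subalgebra.center K D₁ = ⊥ ∧ Module.finrank K D₁ = 4 ∧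
        FiniteDimensional K D₂ ∧ Subalgebra.center K D₂ = ⊥ ∧ Module.finrank K D₂ = 4 ∧
        IsEmpty (D₁ ≃ₐ[K] D₂) ∧
        (∀ (F : Type) [Field F] [Algebra K F], Module.finrank K F = 2 →
          (Nonempty (F →ₐ[K] D₁) ↔ Nonempty (F →ₐ[K] D₂))) := by
  obtain ⟨K, _, _, h3, h7, h21, hrep⟩ := exists_field
  refine ⟨K, inferInstance, inferInstance, QuaternionAlgebra K (-1) 0 3,
    QuaternionAlgebra K (-1) 0 7,
    DivisionRing.ofIsUnitOrEqZero (quat_isUnit 3 h3), inferInstanceAs (Algebra K (QuaternionAlgebra K (-1) 0 3)),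
    DivisionRing.ofIsUnitOrEqZero (quat_isUnit 7 h7), inferInstanceAs (Algebra K (QuaternionAlgebra K (-1) 0 7)),
    ?_, ?_, ?_, ?_, ?_, ?_, ?_, ?_⟩
  · exact inferInstanceAs (Module.Finite K (QuaternionAlgebra K (-1) 0 3))
  · exact quat_center 3
  · exact QuaternionAlgebra.finrank_eq_four _ _ _
  · exact inferInstanceAs (Module.Finite K (QuaternionAlgebra K (-1) 0 7))
  · exact quat_center 7
  · exact QuaternionAlgebra.finrank_eq_four _ _ _
  · exact quat_noniso h7 h21
  · intro F _ _ hF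
    exact ⟨fun _ => quat_embed 7 (fun d hd => by simpa using hrep d hd 7 (Or.inr rfl)) F hF,
      fun _ => quat_embed 3 (fun d hd => by simpa using hrep d hd 3 (Or.inl rfl)) F hF⟩
end

section
/- There exists a field K of characteristic 0 and an infinite sequence D₁, D₂, D₃, … of quaternion division algebras over K (central division K-algebras of degree 2) that are pairwise non-isomorphic as K-algebras, yet any two of them have the same quadratic subfields: for every field extension F/K of degree 2 and all indices i, j, there is a K-algebra embedding F → D_i if and only if there is a K-algebra embedding F → D_j. In particular, the genus of a quaternion division algebra over K can be infinite. -/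
/-- A bundled central division algebra of degree `n` over `K`. -/
structure CentralDivAlg (K : Type) [Field K] (n : ℕ) : Type 1 where
  carrier : Type
  [divisionRing : DivisionRing carrier]
  [algebra : Algebra K carrier]
  [findim : FiniteDimensional K carrier]
  central : Subalgebra.center K carrier = ⊥
  degree_eq : Module.finrank K carrier = n ^ 2

attribute [instance] CentralDivAlg.divisionRing CentralDivAlg.algebra CentralDivAlg.findim

open Polynomial

namespace QG
set_option linter.unusedSectionVars false

section Poly
variable {k : Type} [Field k] [CharZero k]

/-- being a sum of two squares -/
def SSf (k : Type) [Field k] (s : k) : Prop := ∃ x y : k, s = x ^ 2 + y ^ 2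

theorem ssf_of_neg_one {i : k} (hi : i ^ 2 = -1) (s : k) : SSf k s := by
  refine ⟨(s + 1) / 2, i * (s - 1) / 2, ?_⟩
  field_simp
  rw [hi]; ring

theorem aniso2 {s u v : k} (hs : ¬ SSf k s) (h : u ^ 2 + v ^ 2 = 0) : u = 0 ∧ v = 0 := by
  by_cases hv : v = 0
  · subst hv; simpa using h
  · exact absurd (ssf_of_neg_one (i := u / v) (by field_simp; linear_combination h) s) hs

theorem aniso3 {s u v t : k} (hs : ¬ SSf k s) (h : u ^ 2 + v ^ 2 - s * t ^ 2 = 0) :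
    u = 0 ∧ v = 0 ∧ t = 0 := by
  by_cases ht : t = 0
  · subst ht
    obtain ⟨h1, h2⟩ := aniso2 hs (u := u) (v := v) (by linear_combination h)
    exact ⟨h1, h2, rfl⟩
  · exact absurd ⟨u / t, v / t, by field_simp; linear_combination -h⟩ hs

theorem coeff_top {s : k} (hs : ¬ SSf k s) {u v t : k[X]} {N : ℕ} (hu : u.natDegree ≤ N)
    (hv : v.natDegree ≤ N) (ht : t.natDegree ≤ N)
    (h : (u ^ 2 + v ^ 2 - C s * t ^ 2).coeff (2 * N) = 0) :
    u.coeff N = 0 ∧ v.coeff N = 0 ∧ t.coeff N = 0 := by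
  apply aniso3 hs
  simpa [coeff_pow_of_natDegree_le hu, coeff_pow_of_natDegree_le hv,
    coeff_pow_of_natDegree_le ht] using h

theorem natDegree_le_pred' {u : k[X]} {N : ℕ} (h : u.natDegree ≤ N + 1) (h0 : u.coeff (N + 1) = 0) :
    u.natDegree ≤ N := by
  have := natDegree_le_pred h h0
  simpa using this

theorem deg_bound {s : k} (hs : ¬ SSf k s) {u v t : k[X]} {M : ℕ}
    (h : (u ^ 2 + v ^ 2 - C s * t ^ 2).natDegree ≤ 2 * M) (j : ℕ) (hu : u.natDegree ≤ M + j)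
    (hv : v.natDegree ≤ M + j) (ht : t.natDegree ≤ M + j) :
    u.natDegree ≤ M ∧ v.natDegree ≤ M ∧ t.natDegree ≤ M := by
  induction j with
  | zero => exact ⟨hu, hv, ht⟩
  | succ j ih =>
    obtain ⟨a, b, c⟩ := coeff_top hs (N := M + j + 1) hu hv ht
      (coeff_eq_zero_of_natDegree_lt (by omega))
    exact ih (natDegree_le_pred' hu a) (natDegree_le_pred' hv b) (natDegree_le_pred' ht c)

theorem deg_bound' {s : k} (hs : ¬ SSf k s) {u v t : k[X]} {M : ℕ}
    (h : (u ^ 2 + v ^ 2 - C s * t ^ 2).natDegree ≤ 2 * M) :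
    u.natDegree ≤ M ∧ v.natDegree ≤ M ∧ t.natDegree ≤ M :=
  deg_bound hs h (u.natDegree + v.natDegree + t.natDegree) (by omega) (by omega) (by omega)

theorem aniso3_poly {s : k} (hs : ¬ SSf k s) {u v t : k[X]}
    (h : u ^ 2 + v ^ 2 - C s * t ^ 2 = 0) : u = 0 ∧ v = 0 ∧ t = 0 := by
  obtain ⟨a, b, c⟩ := deg_bound' hs (u := u) (v := v) (t := t) (M := 0) (by rw [h]; simp)
  obtain ⟨a', b', c'⟩ := coeff_top hs a b c (by rw [h]; simp)
  rw [Nat.le_zero] at a b c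
  rw [eq_C_of_natDegree_eq_zero a, eq_C_of_natDegree_eq_zero b, eq_C_of_natDegree_eq_zero c,
    a', b', c']
  simp

theorem ssf_const {s : k} {u v D : k[X]} (hD : D ≠ 0) (h : C s * D ^ 2 = u ^ 2 + v ^ 2) :
    SSf k s := by
  by_contra hs
  exact hD (aniso3_poly hs (u := u) (v := v) (t := D) (by rw [h]; ring)).2.2

/-- Cassels-Pfister descent. -/
theorem cassels {s : k} (hs : ¬ SSf k s) (f : k[X]) (n : ℕ) : ∀ (u v t D : k[X]), D ≠ 0 →
    D.natDegree ≤ n → u ^ 2 + v ^ 2 - C s * t ^ 2 = D ^ 2 * f →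
    ∃ u v t : k[X], u ^ 2 + v ^ 2 - C s * t ^ 2 = f := by
  induction n with
  | zero =>
    intro u v t D hD hn h
    rw [Nat.le_zero] at hn
    obtain ⟨d, rfl⟩ : ∃ d, D = C d := ⟨_, eq_C_of_natDegree_eq_zero hn⟩
    have hd : d ≠ 0 := by rintro rfl; simp at hD
    have h1 : C d⁻¹ * C d = 1 := by rw [← C_mul, inv_mul_cancel₀ hd, C_1]
    refine ⟨C d⁻¹ * u, C d⁻¹ * v, C d⁻¹ * t, ?_⟩
    linear_combination (C d⁻¹) ^ 2 * h + f * (C d⁻¹ * C d + 1) * h1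
  | succ n ih =>
    intro u v t D hD hn h
    by_cases hn0 : D.natDegree = 0
    · exact ih u v t D hD (by omega) h
    have mod_deg (p : k[X]) : (p % D).natDegree ≤ D.natDegree - 1 := by
      have := natDegree_mod_lt p hn0
      omega
    set u1 := u % D with hu1
    set v1 := v % D with hv1
    set t1 := t % D with ht1
    set u0 := u / D
    set v0 := v / D
    set t0 := t / D
    have eu : u = D * u0 + u1 := (EuclideanDomain.div_add_mod u D).symm
    have ev : v = D * v0 + v1 := (EuclideanDomain.div_add_mod v D).symm
    have et : t = D * t0 + t1 := (EuclideanDomain.div_add_mod t D).symm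
    have du : u1.natDegree ≤ D.natDegree - 1 := mod_deg u
    have dv : v1.natDegree ≤ D.natDegree - 1 := mod_deg v
    have dt : t1.natDegree ≤ D.natDegree - 1 := mod_deg t
    clear_value u1 v1 t1 u0 v0 t0
    by_cases hz : u1 ^ 2 + v1 ^ 2 - C s * t1 ^ 2 = 0
    · obtain ⟨a, b, c⟩ := aniso3_poly hs hz
      subst a b c
      refine ⟨u0, v0, t0, ?_⟩
      have hD2 : D ^ 2 ≠ 0 := pow_ne_zero _ hD
      apply mul_left_cancel₀ hD2
      rw [← h, eu, ev, et]; ring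
    set D' := D * f - D * (u0 ^ 2 + v0 ^ 2 - C s * t0 ^ 2)
      - 2 * (u0 * u1 + v0 * v1 - C s * t0 * t1) with hD'
    have key : u1 ^ 2 + v1 ^ 2 - C s * t1 ^ 2 = D * D' := by
      rw [eu, ev, et] at h
      rw [hD']
      linear_combination h
    have hD'0 : D' ≠ 0 := by
      intro h0; rw [h0, mul_zero] at key; exact hz key
    have hdeg : D'.natDegree ≤ n := by
      have h1 : (D * D').natDegree ≤ 2 * (D.natDegree - 1) := by
        rw [← key]
        have hb (p : k[X]) (hp : p.natDegree ≤ D.natDegree - 1) :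
            (p ^ 2).natDegree ≤ 2 * (D.natDegree - 1) := natDegree_pow_le_of_le 2 hp
        refine (natDegree_sub_le_of_le (natDegree_add_le_of_degree_le (hb _ du) (hb _ dv))
          ((natDegree_C_mul_le _ _).trans (hb _ dt))).trans (by simp)
      rw [natDegree_mul hD hD'0] at h1
      omega
    set e := u0 ^ 2 + v0 ^ 2 - C s * t0 ^ 2 - f with he
    refine ih (D' * u0 + e * u1) (D' * v0 + e * v1) (D' * t0 + e * t1) D' hD'0 hdeg ?_
    have hD'' : D' = - D * e - 2 * (u0 * u1 + v0 * v1 - C s * t0 * t1) := by rw [hD', he]; ring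
    linear_combination e ^ 2 * key + (D' ^ 2) * he.symm - D' * e * hD''

theorem conic_poly {s c : k} {u v t D : k[X]} (hD : D ≠ 0)
    (h : u ^ 2 + v ^ 2 - C s * t ^ 2 = D ^ 2 * (C s * (C c - X ^ 2))) :
    SSf k s ∨ SSf k (s * c) := by
  by_cases hs : SSf k s
  · exact Or.inl hs
  right
  have hs0 : s ≠ 0 := by rintro rfl; exact hs ⟨0, 0, by simp⟩
  obtain ⟨u, v, t, h⟩ := cassels hs _ _ u v t D hD le_rfl h
  obtain ⟨du, dv, dt⟩ := deg_bound' hs (u := u) (v := v) (t := t) (M := 1) (by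
    rw [h]; compute_degree)
  obtain ⟨a1, a0, rfl⟩ := exists_eq_X_add_C_of_natDegree_le_one du
  obtain ⟨b1, b0, rfl⟩ := exists_eq_X_add_C_of_natDegree_le_one dv
  obtain ⟨t1, t0, rfl⟩ := exists_eq_X_add_C_of_natDegree_le_one dt
  have ev (x : k) : (a1 * x + a0) ^ 2 + (b1 * x + b0) ^ 2 - s * (t1 * x + t0) ^ 2
      = s * (c - x ^ 2) := by
    simpa using congrArg (eval x) h
  have e0 := ev 0
  have e1 := ev 1
  have e2 := ev (-1)
  have h0 : a0 ^ 2 + b0 ^ 2 - s * t0 ^ 2 = s * c := by linear_combination e0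
  have h1 : a1 ^ 2 + b1 ^ 2 - s * t1 ^ 2 = - s := by linear_combination (e1 + e2) / 2 - e0
  have h2 : a1 * a0 + b1 * b0 - s * t1 * t0 = 0 := by linear_combination (e1 - e2) / 4
  by_cases ht : t1 = 1
  · subst ht
    obtain ⟨rfl, rfl⟩ := aniso2 hs (u := a1) (v := b1) (by linear_combination h1)
    have : t0 = 0 := by simpa [hs0] using h2
    subst this
    exact ⟨a0, b0, by linear_combination -h0⟩
  · have ht' : 1 - t1 ≠ 0 := fun h => ht (by linear_combination -h)
    refine ⟨a0 + t0 * a1 / (1 - t1), b0 + t0 * b1 / (1 - t1), ?_⟩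
    field_simp
    linear_combination (-(1 - t1) ^ 2) * h0 - t0 ^ 2 * h1 - 2 * t0 * (1 - t1) * h2

theorem red_mod (a : k) (u : k[X]) : ∃ (q : k[X]) (u0 u1 : k),
    u = (X ^ 2 + C a) * q + (C u1 * X + C u0) := by
  have hm : (X ^ 2 + C a : k[X]).Monic := by monicity!
  have hd : (X ^ 2 + C a : k[X]).natDegree = 2 := by compute_degree!
  have h := natDegree_modByMonic_lt u hm (by intro h; rw [h] at hd; simp at hd)
  obtain ⟨u1, u0, e⟩ := exists_eq_X_add_C_of_natDegree_le_one (p := u %ₘ (X ^ 2 + C a)) (by omega)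
  refine ⟨u /ₘ (X ^ 2 + C a), u0, u1, ?_⟩
  rw [← e, add_comm, modByMonic_add_div]

theorem dvd_small {a x y : k} (h : (X ^ 2 + C a : k[X]) ∣ C x * X + C y) : x = 0 ∧ y = 0 := by
  have hd : (X ^ 2 + C a : k[X]).natDegree = 2 := by compute_degree!
  have h0 : C x * X + C y = 0 := by
    by_contra hne
    have := natDegree_le_of_dvd h hne
    have h2 : (C x * X + C y).natDegree ≤ 1 := natDegree_linear_le
    omega
  have e0 := congrArg (eval 0) h0
  have e1 := congrArg (eval 1) h0
  simp at e0 e1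
  subst e0
  simpa using e1

theorem orth_aux {a u0 u1 v0 v1 : k} (ha : ∀ b : k, b ^ 2 ≠ a) (hi : ∀ b : k, b ^ 2 ≠ -1)
    (h1 : u0 * u1 + v0 * v1 = 0) (h2 : u0 ^ 2 + v0 ^ 2 = a * (u1 ^ 2 + v1 ^ 2)) :
    u0 = 0 ∧ u1 = 0 ∧ v0 = 0 ∧ v1 = 0 := by
  have an (x y : k) (h : x ^ 2 + y ^ 2 = 0) : x = 0 ∧ y = 0 := by
    by_cases hy : y = 0
    · subst hy; simpa using h
    · exact absurd (by field_simp; linear_combination h) (hi (x / y))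
  by_cases hn : u1 ^ 2 + v1 ^ 2 = 0
  · obtain ⟨rfl, rfl⟩ := an _ _ hn
    obtain ⟨rfl, rfl⟩ := an u0 v0 (by linear_combination h2)
    simp
  · exfalso
    apply ha ((u1 * v0 - v1 * u0) / (u1 ^ 2 + v1 ^ 2))
    field_simp
    linear_combination (u1 ^ 2 + v1 ^ 2) * h2 - (u0 * u1 + v0 * v1) * h1

theorem ram_step {e a : k} (he : e ≠ 0) (ha : ∀ b : k, b ^ 2 ≠ a) (hi : ∀ b : k, b ^ 2 ≠ -1)
    {u v D : k[X]} (h : C e * (X ^ 2 + C a) * D ^ 2 = u ^ 2 + v ^ 2) :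
    ∃ u' v' D' : k[X], D = (X ^ 2 + C a) * D' ∧
      C e * (X ^ 2 + C a) * D' ^ 2 = u' ^ 2 + v' ^ 2 := by
  have hm : (X ^ 2 + C a : k[X]).Monic := by monicity!
  obtain ⟨q, u0, u1, eu⟩ := red_mod a u
  obtain ⟨r, v0, v1, ev⟩ := red_mod a v
  obtain ⟨w, d0, d1, eD⟩ := red_mod a D
  have hC : C e⁻¹ * C e = 1 := by rw [← C_mul, inv_mul_cancel₀ he, C_1]
  obtain ⟨h1, h2⟩ := dvd_small (a := a) (x := 2 * (u0 * u1 + v0 * v1))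
    (y := u0 ^ 2 + v0 ^ 2 - a * (u1 ^ 2 + v1 ^ 2))
    ⟨C e * D ^ 2 - (X ^ 2 + C a) * q ^ 2 - 2 * q * (C u1 * X + C u0) - (X ^ 2 + C a) * r ^ 2
      - 2 * r * (C v1 * X + C v0) - C u1 ^ 2 - C v1 ^ 2, by
      rw [eu, ev] at h
      simp only [C_mul, C_add, C_sub, C_pow, map_ofNat]
      linear_combination -h⟩
  obtain ⟨rfl, rfl, rfl, rfl⟩ := orth_aux ha hi (by simpa using h1) (by linear_combination h2)
  simp only [C_0, zero_mul, add_zero] at eu ev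
  have h3 : C e * D ^ 2 = (X ^ 2 + C a) * (q ^ 2 + r ^ 2) := by
    apply mul_left_cancel₀ hm.ne_zero
    rw [eu, ev] at h
    linear_combination h
  obtain ⟨h4, h5⟩ := dvd_small (a := a) (x := 2 * (d0 * d1)) (y := d0 ^ 2 - a * d1 ^ 2)
    ⟨C e⁻¹ * (q ^ 2 + r ^ 2) - (X ^ 2 + C a) * w ^ 2 - 2 * w * (C d1 * X + C d0) - C d1 ^ 2, by
      have h3' := h3
      rw [eD] at h3'
      simp only [C_mul, C_add, C_sub, C_pow, map_ofNat]
      linear_combination C e⁻¹ * h3' - ((X ^ 2 + C a) * w + (C d1 * X + C d0)) ^ 2 * hC⟩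
  have hd1 : d1 = 0 := by
    by_contra hd1
    exact ha (d0 / d1) (by field_simp; linear_combination h5)
  subst hd1
  have hd0 : d0 = 0 := by simpa using h5
  subst hd0
  simp only [C_0, zero_mul, add_zero] at eD
  refine ⟨q, r, w, eD, ?_⟩
  apply mul_left_cancel₀ hm.ne_zero
  rw [eD] at h3
  linear_combination h3

theorem ram_poly {e a : k} (he : e ≠ 0) (ha : ∀ b : k, b ^ 2 ≠ a) (hi : ∀ b : k, b ^ 2 ≠ -1)
    (n : ℕ) : ∀ u v D : k[X], D ≠ 0 → D.natDegree ≤ n →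
    C e * (X ^ 2 + C a) * D ^ 2 ≠ u ^ 2 + v ^ 2 := by
  have hm : (X ^ 2 + C a : k[X]).Monic := by monicity!
  have hd : (X ^ 2 + C a : k[X]).natDegree = 2 := by compute_degree!
  induction n with
  | zero =>
    intro u v D hD hn h
    obtain ⟨u', v', D', rfl, h'⟩ := ram_step he ha hi h
    rw [natDegree_mul hm.ne_zero (right_ne_zero_of_mul hD)] at hn
    omega
  | succ n ih =>
    intro u v D hD hn h
    obtain ⟨u', v', D', rfl, h'⟩ := ram_step he ha hi h
    rw [natDegree_mul hm.ne_zero (right_ne_zero_of_mul hD)] at hn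
    exact ih u' v' D' (right_ne_zero_of_mul hD) (by omega) h'

end Poly
end QG
open Polynomial
namespace QG
section Sub

/-- sum of two squares in a subfield -/
def SS (K : Subfield ℂ) (s : ℂ) : Prop := ∃ x ∈ K, ∃ y ∈ K, s = x ^ 2 + y ^ 2

theorem ss_iff {K : Subfield ℂ} (s : K) : SS K s ↔ SSf K s := by
  constructor
  · rintro ⟨x, hx, y, hy, h⟩
    exact ⟨⟨x, hx⟩, ⟨y, hy⟩, Subtype.ext (by simpa using h)⟩
  · rintro ⟨x, y, h⟩
    exact ⟨x, x.2, y, y.2, by rw [h]; simp⟩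

theorem SS.mono {K L : Subfield ℂ} (h : K ≤ L) {s : ℂ} : SS K s → SS L s := by
  rintro ⟨x, hx, y, hy, e⟩
  exact ⟨x, h hx, y, h hy, e⟩

/-- simple adjunction -/
noncomputable def adj (K : Subfield ℂ) (z : ℂ) : Subfield ℂ :=
  (IntermediateField.adjoin K {z}).toSubfield

theorem le_adj (K : Subfield ℂ) (z : ℂ) : K ≤ adj K z := fun x hx =>
  (IntermediateField.adjoin K {z}).algebraMap_mem ⟨x, hx⟩

theorem self_mem_adj (K : Subfield ℂ) (z : ℂ) : z ∈ adj K z :=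
  IntermediateField.mem_adjoin_simple_self K z

theorem frac {K : Subfield ℂ} {z u : ℂ} (hu : u ∈ adj K z) :
    ∃ P D : K[X], aeval z D ≠ 0 ∧ u * aeval z D = aeval z P := by
  obtain ⟨r, s, h⟩ := (IntermediateField.mem_adjoin_simple_iff K u).1 hu
  by_cases hs : aeval z s = 0
  · refine ⟨0, 1, by simp, ?_⟩
    rw [h, hs]; simp
  · exact ⟨r, s, hs, by rw [h]; field_simp⟩

theorem frac3 {K : Subfield ℂ} {z u v t : ℂ} (hu : u ∈ adj K z) (hv : v ∈ adj K z)
    (ht : t ∈ adj K z) :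
    ∃ P Q R D : K[X], aeval z D ≠ 0 ∧ u * aeval z D = aeval z P ∧ v * aeval z D = aeval z Q ∧
      t * aeval z D = aeval z R := by
  obtain ⟨P, D, hD, h⟩ := frac hu
  obtain ⟨Q, E, hE, h'⟩ := frac hv
  obtain ⟨R, F, hF, h''⟩ := frac ht
  refine ⟨P * E * F, Q * D * F, R * D * E, D * E * F, by simp [hD, hE, hF], ?_, ?_, ?_⟩
  · simp only [map_mul]; rw [← h]; ring
  · simp only [map_mul]; rw [← h']; ring
  · simp only [map_mul]; rw [← h'']; ring

theorem adj_countable (K : Subfield ℂ) [Countable K] (z : ℂ) : Countable (adj K z) := by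
  have h := IntermediateField.lift_cardinalMk_adjoin_le K ({z} : Set ℂ)
  rw [← Cardinal.mk_le_aleph0_iff]
  simp only [Cardinal.lift_id] at h
  refine h.trans ?_
  simp

theorem exists_tr (K : Subfield ℂ) [Countable K] : ∃ z : ℂ, Transcendental K z := by
  by_contra! h
  have h1 := Algebraic.countable K ℂ
  have : {x : ℂ | IsAlgebraic K x} = Set.univ := by
    ext x
    simpa [Transcendental] using h x
  rw [this] at h1
  exact not_countable_complex h1

theorem tr_inj {K : Subfield ℂ} {z : ℂ} (hz : Transcendental K z) :
    Function.Injective (aeval z : K[X] →ₐ[K] ℂ) := transcendental_iff_injective.1 hz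

theorem ss_tr {K : Subfield ℂ} {z : ℂ} (hz : Transcendental K z) {s : ℂ} (hs : s ∈ K)
    (h : SS (adj K z) s) : SS K s := by
  obtain ⟨x, hx, y, hy, e⟩ := h
  obtain ⟨P, Q, -, D, hD, h1, h2, -⟩ := frac3 hx hy hy
  refine (ss_iff ⟨s, hs⟩).2 (ssf_const (D := D) (u := P) (v := Q) (by rintro rfl; simp at hD) ?_)
  apply tr_inj hz
  simp only [map_mul, map_pow, map_add, aeval_C, ← h1, ← h2]
  change s * _ = _
  rw [e]; ring

theorem not_ss_ram {K : Subfield ℂ} {z : ℂ} (hz : Transcendental K z) {s r a : ℂ} (hs : s ∈ K)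
    (hr : r ∈ K) (ha : a ∈ K) (hs0 : s ≠ 0) (hr0 : r ≠ 0) (hsq : ∀ b ∈ K, b ^ 2 ≠ a)
    (hi : ∀ b ∈ K, b ^ 2 ≠ -1) : ¬ SS (adj K z) (s * ((z ^ 2 + a) / r)) := by
  rintro ⟨x, hx, y, hy, e⟩
  obtain ⟨P, Q, -, D, hD, h1, h2, -⟩ := frac3 hx hy hy
  refine ram_poly (k := K) (e := ⟨s, hs⟩ * ⟨r, hr⟩) (a := ⟨a, ha⟩) ?_ ?_ ?_ _ (C ⟨r, hr⟩ * P) (C ⟨r, hr⟩ * Q) D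
    (by rintro rfl; simp at hD) le_rfl ?_
  · simpa [Subtype.ext_iff] using And.intro hs0 hr0
  · intro b hb; exact hsq b b.2 (by simpa using congrArg Subtype.val hb)
  · intro b hb; exact hi b b.2 (by simpa using congrArg Subtype.val hb)
  apply tr_inj hz
  simp only [map_mul, map_pow, map_add, aeval_C, aeval_X, ← h1, ← h2]
  change (s * r) * (z ^ 2 + a) * _ = (r * _) ^ 2 + (r * _) ^ 2
  field_simp at e
  linear_combination r * (aeval z D) ^ 2 * e

theorem mem_quad {K : Subfield ℂ} {w u : ℂ} (hw : w ^ 2 ∈ K) (hu : u ∈ adj K w) :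
    ∃ u0 ∈ K, ∃ u1 ∈ K, u = u0 + u1 * w := by
  have hgi : IsIntegral K w := by
    refine ⟨X ^ 2 + C (-⟨w ^ 2, hw⟩), by monicity!, ?_⟩
    rw [eval₂_add, eval₂_pow, eval₂_X, eval₂_C, map_neg]
    change w ^ 2 + - w ^ 2 = 0
    ring
  have h1 : u ∈ (IntermediateField.adjoin K {w}).toSubalgebra := hu
  rw [IntermediateField.adjoin_simple_toSubalgebra_of_isAlgebraic hgi.isAlgebraic,
    Algebra.adjoin_singleton_eq_range_aeval] at h1
  obtain ⟨p, rfl⟩ := h1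
  obtain ⟨q, p0, p1, e⟩ := red_mod (-⟨w ^ 2, hw⟩ : K) p
  refine ⟨p0, p0.2, p1, p1.2, ?_⟩
  have := congrArg (aeval w) e
  simp only [map_mul, map_pow, map_add, aeval_C, aeval_X, map_neg] at this
  change aeval w p = _
  rw [this]
  change (w ^ 2 + - w ^ 2) * _ + (p1 * w + p0) = _
  ring

theorem ss_conic {k : Subfield ℂ} {z w s c : ℂ} (hz : Transcendental k z) (hs : s ∈ k)
    (hc : c ∈ k) (hw : w ^ 2 = c - z ^ 2) (h : SS (adj (adj k z) w) s) :
    SS k s ∨ SS k (s * c) := by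
  set M := adj k z with hM
  have hzM : z ∈ M := self_mem_adj k z
  have hw2 : w ^ 2 ∈ M := by
    rw [hw]; exact M.sub_mem (le_adj k z hc) (M.pow_mem hzM 2)
  obtain ⟨x, hx, y, hy, e⟩ := h
  obtain ⟨u0, hu0, u1, hu1, rfl⟩ := mem_quad hw2 hx
  obtain ⟨v0, hv0, v1, hv1, rfl⟩ := mem_quad hw2 hy
  by_cases hwM : w ∈ M
  · exact Or.inl (ss_tr hz hs ⟨_, M.add_mem hu0 (M.mul_mem hu1 hwM), _,
      M.add_mem hv0 (M.mul_mem hv1 hwM), e⟩)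
  have hB : u0 * u1 + v0 * v1 = 0 := by
    by_contra hB
    apply hwM
    have : w = (s - (u0 ^ 2 + v0 ^ 2) - w ^ 2 * (u1 ^ 2 + v1 ^ 2)) / (2 * (u0 * u1 + v0 * v1)) := by
      field_simp
      rw [e]; ring
    rw [this]
    have hsM : s ∈ M := le_adj k z hs
    have h2 : (2 : ℂ) ∈ M := ofNat_mem M 2
    exact M.div_mem (M.sub_mem (M.sub_mem hsM (M.add_mem (M.pow_mem hu0 2) (M.pow_mem hv0 2)))
      (M.mul_mem hw2 (M.add_mem (M.pow_mem hu1 2) (M.pow_mem hv1 2))))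
      (M.mul_mem h2 (M.add_mem (M.mul_mem hu0 hu1) (M.mul_mem hv0 hv1)))
  by_cases hn : u1 ^ 2 + v1 ^ 2 = 0
  · refine Or.inl (ss_tr hz hs ⟨u0, hu0, v0, hv0, ?_⟩)
    rw [e]; linear_combination 2 * w * hB + w ^ 2 * hn
  set τ := (u1 * v0 - v1 * u0) / (u1 ^ 2 + v1 ^ 2) with hτ
  have hτM : τ ∈ M := M.div_mem (M.sub_mem (M.mul_mem hu1 hv0) (M.mul_mem hv1 hu0))
    (M.add_mem (M.pow_mem hu1 2) (M.pow_mem hv1 2))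
  have e0 : u0 = - τ * v1 := by rw [hτ]; field_simp; linear_combination u1 * hB
  have e1 : v0 = τ * u1 := by rw [hτ]; field_simp; linear_combination v1 * hB
  have es : s = (u1 ^ 2 + v1 ^ 2) * (w ^ 2 + τ ^ 2) := by
    rw [e, e0, e1]; ring
  have hm : w ^ 2 + τ ^ 2 ∈ M := M.add_mem hw2 (M.pow_mem hτM 2)
  obtain ⟨P, Q, R, D, hD, h1, h2, h3⟩ := frac3 (M.mul_mem hu1 hm) (M.mul_mem hv1 hm) hτM
  have := conic_poly (k := k) (s := ⟨s, hs⟩) (c := ⟨c, hc⟩) (u := P) (v := Q) (t := R) (D := D)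
    (by rintro rfl; simp at hD) (by
      apply tr_inj hz
      simp only [map_mul, map_pow, map_add, map_sub, aeval_C, aeval_X, ← h1, ← h2, ← h3]
      change _ - s * _ = _ * (s * (c - z ^ 2))
      rw [← hw]
      linear_combination (- (w ^ 2 + τ ^ 2) * (aeval z D) ^ 2) * es)
  rcases this with h | h
  · exact Or.inl ((ss_iff _).2 h)
  · exact Or.inr ((ss_iff _).2 h)

/-- countable subfields creating no new sums of two squares among natural numbers -/
def Good (K : Subfield ℂ) : Prop :=
  Countable K ∧ ∀ n : ℕ, n ≠ 0 → SS K n → ∃ x y : ℕ, n = x ^ 2 + y ^ 2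

/-- `a` is a square or represented by the pure quaternion form of `(-1, r)` -/
def G (L : Subfield ℂ) (a : ℂ) (r : ℕ) : Prop :=
  (∃ b ∈ L, b ^ 2 = a) ∨ ∃ x ∈ L, ∃ y ∈ L, ∃ z ∈ L, a = - x ^ 2 + r * (y ^ 2 + z ^ 2)

theorem G.mono {K L : Subfield ℂ} (h : K ≤ L) {a : ℂ} {r : ℕ} : G K a r → G L a r := by
  rintro (⟨b, hb, e⟩ | ⟨x, hx, y, hy, z, hz, e⟩)
  · exact Or.inl ⟨b, h hb, e⟩
  · exact Or.inr ⟨x, h hx, y, h hy, z, h hz, e⟩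

theorem Good.neg_one {K : Subfield ℂ} (hK : Good K) : ∀ b ∈ K, b ^ 2 ≠ -1 := by
  intro b hb h
  obtain ⟨x, y, e⟩ := hK.2 3 (by norm_num) (by
    have := ssf_of_neg_one (k := K) (i := ⟨b, hb⟩) (Subtype.ext (by simpa using h)) (3 : ℕ)
    exact (ss_iff _).2 this)
  have hx : x ≤ 1 := by nlinarith
  have hy : y ≤ 1 := by nlinarith
  interval_cases x <;> interval_cases y <;> omega

theorem step {K : Subfield ℂ} (hK : Good K) {a : ℂ} (ha : a ∈ K) {r : ℕ} (hr : r ≠ 0) :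
    ∃ L, K ≤ L ∧ Good L ∧ G L a r := by
  by_cases hsq : ∃ b ∈ K, b ^ 2 = a
  · exact ⟨K, le_rfl, hK, Or.inl hsq⟩
  push Not at hsq
  have := hK.1
  obtain ⟨x, hx⟩ := exists_tr K
  set k := adj K x with hk
  have : Countable k := adj_countable K x
  obtain ⟨z, hz⟩ := exists_tr k
  have : Countable (adj k z) := adj_countable k z
  set c := (x ^ 2 + a) / (r : ℂ) with hc
  obtain ⟨w, hw⟩ : ∃ w : ℂ, c - z ^ 2 = w ^ 2 := by
    obtain ⟨w, hw⟩ := IsAlgClosed.exists_pow_nat_eq (c - z ^ 2) (n := 2) (by norm_num)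
    exact ⟨w, hw.symm⟩
  have hr' : (r : ℂ) ≠ 0 := by exact_mod_cast hr
  have hxk : x ∈ k := self_mem_adj K x
  have hck : c ∈ k := k.div_mem (k.add_mem (k.pow_mem hxk 2) (le_adj K x ha)) (natCast_mem k r)
  have hkL : k ≤ adj (adj k z) w := (le_adj k z).trans (le_adj _ w)
  refine ⟨adj (adj k z) w, (le_adj K x).trans hkL, ⟨adj_countable _ w, ?_⟩, Or.inr ?_⟩
  · intro n hn h
    rcases ss_conic hz (natCast_mem k n) hck hw.symm h with h | h
    · exact hK.2 n hn (ss_tr hx (natCast_mem K n) h)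
    · exact absurd h (not_ss_ram hx (natCast_mem K n) (natCast_mem K r) ha
        (by exact_mod_cast hn) hr' hsq hK.neg_one)
  · refine ⟨x, hkL hxk, w, self_mem_adj _ w, z, le_adj _ w (self_mem_adj k z), ?_⟩
    rw [← hw, hc]; field_simp; ring

theorem good_iSup {f : ℕ → Subfield ℂ} (hf : Monotone f) (h : ∀ n, Good (f n)) :
    Good (⨆ n, f n) := by
  have hd : Directed (· ≤ ·) f := hf.directed_le
  refine ⟨?_, ?_⟩
  · have : ((⨆ n, f n : Subfield ℂ) : Set ℂ).Countable := by
      rw [Subfield.coe_iSup_of_directed hd]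
      exact Set.countable_iUnion fun n => (h n).1
    exact this
  · rintro n hn ⟨x, hx, y, hy, e⟩
    obtain ⟨i, hi⟩ := (Subfield.mem_iSup_of_directed hd).1 hx
    obtain ⟨j, hj⟩ := (Subfield.mem_iSup_of_directed hd).1 hy
    exact (h (max i j)).2 n hn ⟨x, hf (le_max_left i j) hi, y, hf (le_max_right i j) hj, e⟩

theorem plus {K : Subfield ℂ} (hK : Good K) :
    ∃ L, K ≤ L ∧ Good L ∧ ∀ a ∈ K, ∀ r : ℕ, r ≠ 0 → G L a r := by
  have := hK.1
  obtain ⟨e, he⟩ := exists_surjective_nat (K × ℕ)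
  have st : ∀ (n : ℕ) (L : {L : Subfield ℂ // K ≤ L ∧ Good L}),
      ∃ M : {L : Subfield ℂ // K ≤ L ∧ Good L}, L.1 ≤ M.1 ∧
        ((e n).2 ≠ 0 → G M.1 (e n).1 (e n).2) := by
    rintro n ⟨L, h1, h2⟩
    by_cases h0 : (e n).2 = 0
    · exact ⟨⟨L, h1, h2⟩, le_rfl, fun h => absurd h0 h⟩
    · obtain ⟨M, a, b, c⟩ := step h2 (h1 (e n).1.2) h0
      exact ⟨⟨M, h1.trans a, b⟩, a, fun _ => c⟩
  choose F hF1 hF2 using st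
  let f : ℕ → {L : Subfield ℂ // K ≤ L ∧ Good L} :=
    fun n => Nat.rec ⟨K, le_rfl, hK⟩ (fun n L => F n L) n
  have hmono : Monotone fun n => (f n).1 := monotone_nat_of_le_succ fun n => hF1 n (f n)
  refine ⟨⨆ n, (f n).1, (f 0).2.1.trans (le_iSup (fun n => (f n).1) 0),
    good_iSup hmono fun n => (f n).2.2, ?_⟩
  intro a ha r hr
  obtain ⟨n, hn⟩ := he (⟨a, ha⟩, r)
  have := hF2 n (f n)
  rw [hn] at this
  exact (this hr).mono (le_iSup (fun n => (f n).1) (n + 1))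

theorem final_field (K : Subfield ℂ) (hK : Good K) :
    ∃ L, Good L ∧ ∀ a ∈ L, ∀ r : ℕ, r ≠ 0 → G L a r := by
  have st : ∀ L : {L : Subfield ℂ // Good L}, ∃ M : {L : Subfield ℂ // Good L}, L.1 ≤ M.1 ∧
      ∀ a ∈ L.1, ∀ r : ℕ, r ≠ 0 → G M.1 a r := by
    rintro ⟨L, h⟩
    obtain ⟨M, a, b, c⟩ := plus h
    exact ⟨⟨M, b⟩, a, c⟩
  choose F hF1 hF2 using st
  let f : ℕ → {L : Subfield ℂ // Good L} := fun n => Nat.rec ⟨K, hK⟩ (fun _ L => F L) n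
  have hmono : Monotone fun n => (f n).1 := monotone_nat_of_le_succ fun n => hF1 (f n)
  refine ⟨⨆ n, (f n).1, good_iSup hmono fun n => (f n).2, ?_⟩
  intro a ha r hr
  obtain ⟨i, hi⟩ := (Subfield.mem_iSup_of_directed hmono.directed_le).1 ha
  exact (hF2 (f i) a hi r hr).mono (le_iSup (fun n => (f n).1) (i + 1))

theorem sq_nat {n d x y : ℕ} (hd : d ≠ 0) (hn : n ≠ 0) (h : n * d ^ 2 = x ^ 2 + y ^ 2) :
    ∃ x y : ℕ, n = x ^ 2 + y ^ 2 := by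
  rw [Nat.eq_sq_add_sq_iff]
  intro q hq h3
  have hqp := Nat.prime_of_mem_primeFactors hq
  have := Fact.mk hqp
  have := Nat.eq_sq_add_sq_iff.1 ⟨x, y, h⟩ q (by
    rw [Nat.mem_primeFactors] at hq ⊢
    exact ⟨hqp, hq.2.1.mul_right _, by positivity⟩) h3
  rw [padicValNat.mul hn (by positivity), padicValNat.pow] at this
  rw [Nat.even_add] at this
  exact this.2 (by simp)

theorem good_bot : Good ⊥ := by
  have hmem (x : ℂ) (hx : x ∈ (⊥ : Subfield ℂ)) : ∃ q : ℚ, (q : ℂ) = x := by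
    have h : (⊥ : Subfield ℂ) ≤ (algebraMap ℚ ℂ).fieldRange := bot_le
    obtain ⟨q, hq⟩ := h hx
    exact ⟨q, by simpa using hq⟩
  refine ⟨?_, ?_⟩
  · have : ((⊥ : Subfield ℂ) : Set ℂ).Countable :=
      (Set.countable_range (fun q : ℚ => (q : ℂ))).mono fun x hx => hmem x hx
    exact this
  · rintro n hn ⟨x, hx, y, hy, e⟩
    obtain ⟨p, rfl⟩ := hmem x hx
    obtain ⟨q, rfl⟩ := hmem y hy
    have e' : (n : ℚ) = p ^ 2 + q ^ 2 := by exact_mod_cast e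
    have hp := p.num_div_den
    have hq := q.num_div_den
    have hp0 : (p.den : ℚ) ≠ 0 := by exact_mod_cast p.den_ne_zero
    have hq0 : (q.den : ℚ) ≠ 0 := by exact_mod_cast q.den_ne_zero
    refine sq_nat (d := p.den * q.den) (x := (p.num * q.den).natAbs) (y := (q.num * p.den).natAbs)
      (mul_ne_zero p.den_ne_zero q.den_ne_zero) hn ?_
    zify
    rw [sq_abs, sq_abs]
    rw [← hp, ← hq] at e'
    field_simp at e'
    have : (n : ℚ) * (p.den * q.den) ^ 2 = (p.num * q.den) ^ 2 + (q.num * p.den) ^ 2 := by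
      linear_combination e'
    exact_mod_cast this

end Sub
end QG
open Polynomial
namespace QG
section Quat
open QuaternionAlgebra
variable {K : Type} [Field K] [CharZero K]

/-- the quaternion algebra `(-1, r)` -/
abbrev QA (K : Type) [Field K] (r : K) : Type := QuaternionAlgebra K (-1) 0 r

theorem qa_unit {r : K} (hr : ¬ SSf K r) (q : QA K r) : IsUnit q ∨ q = 0 := by
  obtain ⟨a, b, c, d⟩ := q
  by_cases h : a ^ 2 + b ^ 2 - r * (c ^ 2 + d ^ 2) = 0
  · right
    have hcd : c ^ 2 + d ^ 2 = 0 := by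
      by_contra hne
      apply hr
      refine ⟨(a * c + b * d) / (c ^ 2 + d ^ 2), (a * d - b * c) / (c ^ 2 + d ^ 2), ?_⟩
      field_simp
      linear_combination -(c ^ 2 + d ^ 2) * h
    obtain ⟨rfl, rfl⟩ := aniso2 hr hcd
    obtain ⟨rfl, rfl⟩ := aniso2 hr (u := a) (v := b) (by linear_combination h)
    rfl
  · left
    set n := a ^ 2 + b ^ 2 - r * (c ^ 2 + d ^ 2) with hn
    refine ⟨⟨⟨a, b, c, d⟩, ⟨a / n, -b / n, -c / n, -d / n⟩, ?_, ?_⟩, rfl⟩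
    · ext <;> simp <;> field_simp <;> rw [hn] <;> ring
    · ext <;> simp <;> field_simp <;> rw [hn] <;> ring

theorem qa_center (r : K) : Subalgebra.center K (QA K r) = ⊥ := by
  rw [eq_bot_iff]
  intro q hq
  rw [Subalgebra.mem_center_iff] at hq
  have hi := hq ⟨0, 1, 0, 0⟩
  have hj := hq ⟨0, 0, 1, 0⟩
  obtain ⟨a, b, c, d⟩ := q
  rw [QuaternionAlgebra.ext_iff] at hi hj
  simp at hi hj
  rw [Algebra.mem_bot]
  refine ⟨a, ?_⟩
  have hd : d = 0 := by
    have : 2 * d = 0 := by linear_combination -hi.1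
    simpa using this
  have hc : c = 0 := by
    have : 2 * c = 0 := by linear_combination hi.2
    simpa using this
  have hb : b = 0 := by
    have : 2 * b = 0 := by linear_combination -hj.2
    simpa using this
  subst hd hc hb
  rfl

theorem qa_noniso_aux {r s : K} (hs : ¬ SSf K s) {i' j' : QA K s} (h1 : i' * i' = -1)
    (h2 : j' * j' = algebraMap K _ r) (h3 : i' * j' = - (j' * i')) : SSf K (r * s) := by
  have hs0 : s ≠ 0 := by rintro rfl; exact hs ⟨0, 0, by simp⟩
  let i : QA K s := ⟨0, 1, 0, 0⟩
  have hi : i * i = -1 := by ext <;> simp [i]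
  obtain ⟨u, hu, hui⟩ : ∃ u : QA K s, u ≠ 0 ∧ i * u = u * i' := by
    by_cases h : i + i' = 0
    · refine ⟨⟨0, 0, 1, 0⟩, ?_, ?_⟩
      · intro h0; simpa using congrArg QuaternionAlgebra.imJ h0
      · rw [← neg_eq_of_add_eq_zero_right h]
        ext <;> simp [i]
    · refine ⟨i + i', h, ?_⟩
      rw [mul_add, add_mul, hi, h1, add_comm]
  obtain ⟨v, huv, hvu⟩ := isUnit_iff_exists.1 ((qa_unit hs u).resolve_right hu)
  have hv : i' * v = v * i := by
    calc i' * v = v * (u * i') * v := by rw [← mul_assoc v, hvu, one_mul]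
      _ = v * i * (u * v) := by rw [← hui]; simp only [mul_assoc]
      _ = v * i := by rw [huv, mul_one]
  have ht1 : i * (u * j' * v) = - (u * j' * v * i) := by
    calc i * (u * j' * v) = (i * u) * j' * v := by simp only [mul_assoc]
      _ = u * (i' * j') * v := by rw [hui]; simp only [mul_assoc]
      _ = - (u * j' * (i' * v)) := by rw [h3]; simp only [mul_assoc, mul_neg, neg_mul]
      _ = _ := by rw [hv]; simp only [mul_assoc]
  have ht2 : (u * j' * v) * (u * j' * v) = algebraMap K _ r := by
    calc (u * j' * v) * (u * j' * v) = u * j' * (v * u) * j' * v := by simp only [mul_assoc]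
      _ = u * (j' * j') * v := by rw [hvu, mul_one]; simp only [mul_assoc]
      _ = algebraMap K _ r * (u * v) := by rw [h2, ← Algebra.commutes, mul_assoc]
      _ = _ := by rw [huv, mul_one]
  generalize u * j' * v = t at ht1 ht2
  obtain ⟨a, b, c, d⟩ := t
  rw [QuaternionAlgebra.ext_iff] at ht1 ht2
  simp [i, QuaternionAlgebra.algebraMap_eq] at ht1 ht2
  obtain ⟨e1, e2⟩ := ht1
  have hb : b = 0 := by
    have : 2 * b = 0 := by linear_combination -e1
    simpa using this
  have ha : a = 0 := by
    have : 2 * a = 0 := by linear_combination e2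
    simpa using this
  subst ha hb
  refine ⟨s * c, s * d, ?_⟩
  linear_combination (-s) * ht2.1

theorem qa_noniso {r s : K} (hs : ¬ SSf K s) (hrs : ¬ SSf K (r * s)) :
    IsEmpty (QA K r ≃ₐ[K] QA K s) := by
  refine ⟨fun f => hrs ?_⟩
  let i : QA K r := ⟨0, 1, 0, 0⟩
  let j : QA K r := ⟨0, 0, 1, 0⟩
  have h1 : i * i = -1 := by ext <;> simp [i]
  have h2 : j * j = algebraMap K _ r := by
    ext <;> simp [j, QuaternionAlgebra.algebraMap_eq]
  have h3 : i * j = - (j * i) := by ext <;> simp [i, j]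
  refine qa_noniso_aux hs (i' := f i) (j' := f j) ?_ ?_ ?_
  · rw [← map_mul, h1]; simp
  · rw [← map_mul, h2, AlgEquiv.commutes]
  · rw [← map_mul, h3]; simp

theorem qa_embed {r : K} (hG : ∀ a : K, (∃ b, b ^ 2 = a) ∨
      ∃ x y z : K, a = - x ^ 2 + r * (y ^ 2 + z ^ 2))
    (F : Type) [Field F] [Algebra K F] (hF : Module.finrank K F = 2) :
    Nonempty (F →ₐ[K] QA K r) := by
  have : FiniteDimensional K F := Module.finite_of_finrank_eq_succ hF
  let pb := Field.powerBasisOfFiniteOfSeparable K F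
  have hdim : pb.dim = 2 := by rw [← pb.finrank, hF]
  have hgi : IsIntegral K pb.gen := pb.isIntegral_gen
  have hdeg : (minpoly K pb.gen).natDegree = 2 := by rw [pb.natDegree_minpoly, hdim]
  have hmon := minpoly.monic hgi
  obtain ⟨b, c, hbc⟩ : ∃ b c : K, minpoly K pb.gen = X ^ 2 + C b * X + C c := by
    refine ⟨(minpoly K pb.gen).coeff 1, (minpoly K pb.gen).coeff 0, ?_⟩
    have := hmon.as_sum
    rw [hdeg] at this
    conv_lhs => rw [this]
    simp [Finset.sum_range_succ]
    ring
  rcases hG (b ^ 2 / 4 - c) with ⟨e, he⟩ | ⟨x, y, z, h⟩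
  · exfalso
    have h1 := degree_eq_one_of_irreducible_of_root (minpoly.irreducible hgi) (x := e - b / 2) (by
      rw [hbc]; simp; linear_combination he)
    rw [degree_eq_natDegree hmon.ne_zero, hdeg] at h1
    norm_num at h1
  · let α : QA K r := ⟨-b / 2, x, y, z⟩
    refine ⟨pb.lift α ?_⟩
    rw [hbc]
    simp only [map_add, map_mul, map_pow, aeval_X, aeval_C, pow_two]
    ext <;> simp [α, QuaternionAlgebra.algebraMap_eq]
    · linear_combination -h
    all_goals ring

end Quat
end QG

namespace QG

theorem not_ss_prime {p m : ℕ} (hp : p.Prime) (h3 : p % 4 = 3) (hm : m ≠ 0) (hpm : ¬ p ∣ m) :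
    ¬ ∃ x y : ℕ, p * m = x ^ 2 + y ^ 2 := by
  intro h
  have := Fact.mk hp
  have h1 := Nat.eq_sq_add_sq_iff.1 h p
    (Nat.mem_primeFactors.2 ⟨hp, dvd_mul_right _ _, mul_ne_zero hp.ne_zero hm⟩) h3
  rw [padicValNat.mul hp.ne_zero hm, padicValNat.self hp.one_lt,
    padicValNat.eq_zero_of_not_dvd hpm] at h1
  exact absurd h1 (by decide)

theorem exists_primes : ∃ p : ℕ → ℕ, Function.Injective p ∧ ∀ n, (p n).Prime ∧ p n % 4 = 3 := by
  have h := Nat.infinite_setOfPred_prime_and_eq_mod (q := 4) (a := 3) (by decide)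
  refine ⟨fun n => h.natEmbedding _ n, fun a b hab => (h.natEmbedding _).injective (Subtype.ext hab),
    fun n => ?_⟩
  obtain ⟨h1, h2⟩ := (h.natEmbedding _ n).2
  refine ⟨h1, ?_⟩
  have := (ZMod.natCast_eq_natCast_iff' _ 3 4).1 (by simpa using h2)
  simpa using this

/-- the bundled algebra -/
noncomputable def qaBundle {K : Type} [Field K] [CharZero K] (r : K) (hr : ¬ SSf K r) :
    CentralDivAlg K 2 where
  carrier := QA K r
  divisionRing := DivisionRing.ofIsUnitOrEqZero (qa_unit hr)
  algebra := (inferInstance : Algebra K (QA K r))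
  findim := (inferInstance : FiniteDimensional K (QA K r))
  central := qa_center r
  degree_eq := QuaternionAlgebra.finrank_eq_four _ _ _

end QG



/-- there exist a field `K` of characteristic 0 and an infinite sequence of
quaternion division algebras over `K` (central division `K`-algebras of degree 2) which
are pairwise non-isomorphic, yet any two of them have the same quadratic subfields; in
particular the genus of a quaternion division algebra can be infinite. -/
theorem exists_infinitely_many_quaternion_algebras_with_same_quadratic_subfields :
    ∃ (K : Type) (_ : Field K), CharZero K ∧
      ∃ D : ℕ → CentralDivAlg K 2,
        (∀ i j : ℕ, i ≠ j → IsEmpty ((D i).carrier ≃ₐ[K] (D j).carrier)) ∧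
        (∀ (F : Type) [Field F] [Algebra K F], Module.finrank K F = 2 →
          ∀ i j : ℕ,
            (Nonempty (F →ₐ[K] (D i).carrier) ↔ Nonempty (F →ₐ[K] (D j).carrier))) := by
  obtain ⟨K, hK, hG⟩ := QG.final_field ⊥ QG.good_bot
  obtain ⟨p, hinj, hp⟩ := QG.exists_primes
  have tr (n : ℕ) (hn : n ≠ 0) (h : ¬ ∃ x y : ℕ, n = x ^ 2 + y ^ 2) : ¬ QG.SSf K (n : K) :=
    fun h' => h (hK.2 n hn ((QG.ss_iff (n : K)).2 h'))
  have h1 (n : ℕ) : ¬ QG.SSf K (p n : K) := by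
    apply tr _ (hp n).1.ne_zero
    have := QG.not_ss_prime (hp n).1 (hp n).2 one_ne_zero (hp n).1.not_dvd_one
    rwa [mul_one] at this
  have h2 (i j : ℕ) (hij : i ≠ j) : ¬ QG.SSf K ((p i : K) * (p j : K)) := by
    have := tr _ (mul_ne_zero (hp i).1.ne_zero (hp j).1.ne_zero)
      (QG.not_ss_prime (hp i).1 (hp i).2 (hp j).1.ne_zero (fun hd => hij (hinj
        ((Nat.prime_dvd_prime_iff_eq (hp i).1 (hp j).1).1 hd))))
    rwa [Nat.cast_mul] at this
  refine ⟨K, inferInstance, inferInstance, fun n => QG.qaBundle (p n : K) (h1 n), ?_, ?_⟩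
  · intro i j hij
    exact QG.qa_noniso (h1 j) (h2 i j hij)
  · intro F _ _ hF i j
    have hall (n : ℕ) : Nonempty (F →ₐ[K] QG.QA K (p n : K)) := by
      refine QG.qa_embed (fun a => ?_) F hF
      rcases hG a a.2 (p n) (hp n).1.ne_zero with ⟨b, hb, e⟩ | ⟨x, hx, y, hy, z, hz, e⟩
      · exact Or.inl ⟨⟨b, hb⟩, Subtype.ext (by simpa using e)⟩
      · exact Or.inr ⟨⟨x, hx⟩, ⟨y, hy⟩, ⟨z, hz⟩, Subtype.ext (by simpa using e)⟩
    exact ⟨fun _ => hall j, fun _ => hall i⟩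
end
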